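/- Let Ω = ℤω₁ + ℤω₂ be a lattice in ℂ with Weierstrass functions ℘, ζ, quasi-periods η₁ = η(ω₁), η₂ = η(ω₂), invariants g₂, g₃, and field of endomorphisms k. Let ω ∈ Ω, let p₁, …, p_{n+1} ∈ ℂ ∖ Ω, and let b₀, b₁, …, b_n ∈ k. Assume p_{n+1} = b₀ω + b₁p₁ + ⋯ + b_np_n. Then ℘(p_{n+1}) and ζ(p_{n+1}) are algebraic over the field ℚ(g₂, g₃, ω₁, ω₂, η₁, η₂, p₁, …, p_n, ℘(p₁), …, ℘(p_n), ζ(p₁), …, ζ(p_n)). -/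

import Mathlib

/-!
Let `K` be the algebraic closure in `ℂ` of the field `ℚ(g₂, g₃, ω₁, …, ζ(p_n))`. Call `u ∈ ℂ` a
*point over `K`* (`Pt`) if `u`, `℘(u)`, `℘'(u)` and `ζ(u)` lie in `K`, where `℘`, `℘'`, `ζ` take the
value `0` at lattice points. The theorem says that `q` is a point over `K`. Each `p i` is one, since
`℘'(u)² = 4℘(u)³ - g₂℘(u) - g₃`, and so is every lattice point. Hence it suffices that the points
over `K` form a group stable under multiplication by the elements of the field of endomorphisms.

*Group.* The identity `σ(u+v) σ(u-v) = -(℘(u) - ℘(v)) σ(u)² σ(v)²` (`sig_mul_sig`), which holds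
because the difference of both sides, divided by `σ(u)²`, is an entire elliptic function of `u`,
yields the addition theorems for `ζ`, `℘`, `℘'` by differentiation. They are rational over `ℚ(g₂)`;
translation by a lattice point `l` changes `ζ` by `η(l)`, which lies in `K`.

*Division by an integer `N`* (`Good.rat_of_mul`). Suppose `℘(Nq), ℘'(Nq) ∈ K` but `℘(q) ∉ K`. As `K`
is algebraically closed in `ℂ`, `℘(q)` is transcendental over `K`, so there are embeddings over `K`
into `ℂ` of an algebraic closure of `K(X)` that send `X` to `℘(q)` and to `℘(q) + j`, for each
`j : ℕ`. Since `℘` is surjective, each pair of embeddings gives a `v` with `℘(v) = ℘(q) + j` that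
corresponds to `q` (`Rel`). The correspondence is compatible with addition, hence `Nv` corresponds
to `Nq`, and as `Nq` is rational over `K` this forces `Nv ≡ Nq` modulo the lattice. Only finitely
many `v` modulo the lattice satisfy this, whereas `j` takes infinitely many values.
The claim about `ζ` follows because `ζ(Nq) - Nζ(q) ∈ K`.

*Complex multiplication* (`Good.pt_mul`). If `αΛ ⊆ Λ` and `α ≠ 0`, regrouping the series of
`α² ℘(αz)` along the cosets `ρ + Λ` of `α⁻¹Λ / Λ` gives `∑ (℘(z - ρ) - ℘(-ρ))`, and integration
gives `αζ(αz) = ∑ ζ(z - ρ) + z ∑ ℘(-ρ) + D`. The `ρ` are torsion points, so they are points over `K`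
by the division statement, and evaluation at another torsion point shows `D ∈ K`.
-/

open Complex

noncomputable section

/-- The lattice `ℤω₁ + ℤω₂`, as a set of complex numbers. -/
def LatticePts (ω₁ ω₂ : ℂ) : Set ℂ := {z | ∃ m n : ℤ, z = m * ω₁ + n * ω₂}

/-- `ω₁, ω₂` are the basis of a lattice: they are `ℝ`-linearly independent. -/
def IsLatticeBasis (ω₁ ω₂ : ℂ) : Prop := LinearIndependent ℝ ![ω₁, ω₂]

/-- The nonzero lattice points. -/
def LatticePts' (ω₁ ω₂ : ℂ) : Set ℂ := {w | w ∈ LatticePts ω₁ ω₂ ∧ w ≠ 0}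

/-- The Weierstrass sigma function of the lattice `ℤω₁ + ℤω₂`:
`σ(z) = z ∏_{ω ∈ Ω∖{0}} (1 − z/ω) exp(z/ω + z²/(2ω²))`. -/
def wSigma (ω₁ ω₂ : ℂ) (z : ℂ) : ℂ :=
  z * ∏' w : LatticePts' ω₁ ω₂,
    (1 - z / (w : ℂ)) * Complex.exp (z / w + z ^ 2 / (2 * (w : ℂ) ^ 2))

/-- The Weierstrass zeta function `ζ = σ'/σ`. -/
def wZeta (ω₁ ω₂ : ℂ) (z : ℂ) : ℂ := deriv (wSigma ω₁ ω₂) z / wSigma ω₁ ω₂ z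

/-- The Weierstrass elliptic function `℘ = -ζ'`. -/
def wP (ω₁ ω₂ : ℂ) (z : ℂ) : ℂ := - deriv (wZeta ω₁ ω₂) z

/-- The invariant `g₂ = 60 Σ_{ω ∈ Ω∖{0}} ω⁻⁴` of the lattice. -/
def g2 (ω₁ ω₂ : ℂ) : ℂ := 60 * ∑' w : LatticePts' ω₁ ω₂, ((w : ℂ) ^ 4)⁻¹

/-- The invariant `g₃ = 140 Σ_{ω ∈ Ω∖{0}} ω⁻⁶` of the lattice. -/
def g3 (ω₁ ω₂ : ℂ) : ℂ := 140 * ∑' w : LatticePts' ω₁ ω₂, ((w : ℂ) ^ 6)⁻¹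

/-- The quasi-period `η(ω) = ζ(z + ω) − ζ(z)` (independent of `z`; we evaluate at the
point `(ω₁+ω₂)/3`, which is never a pole of `ζ`, nor is its translate by a lattice point). -/
def wEta (ω₁ ω₂ : ℂ) (ω : ℂ) : ℂ :=
  wZeta ω₁ ω₂ ((ω₁ + ω₂) / 3 + ω) - wZeta ω₁ ω₂ ((ω₁ + ω₂) / 3)

/-- The field of endomorphisms `k = {α ∈ ℂ : αΩ ⊆ Ω} ⊗_ℤ ℚ`, as a set of complex numbers:
the `α ∈ ℂ` such that `mα` stabilizes the lattice for some nonzero integer `m`. -/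
def endQ (ω₁ ω₂ : ℂ) : Set ℂ :=
  {α | ∃ m : ℤ, m ≠ 0 ∧ ∀ w ∈ LatticePts ω₁ ω₂, (m : ℂ) * α * w ∈ LatticePts ω₁ ω₂}

/-- The transcendence degree over `ℚ` of the subfield `ℚ(S)` of `ℂ` generated by `S` is
at least `d`: there are `d` algebraically independent elements in `ℚ(S)`. -/
def trdegGe (S : Set ℂ) (d : ℕ) : Prop :=
  ∃ x : Fin d → ℂ, (∀ i, x i ∈ IntermediateField.adjoin ℚ S) ∧ AlgebraicIndependent ℚ x

namespace EllRel
open PeriodPair Filter Topology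
open scoped PeriodPair

variable (L : PeriodPair)

/-! ### The functions `σ` and `ζ`, and their relation to `℘` -/

/-- The sigma function of the lattice attached to a `PeriodPair`. -/
def sig (z : ℂ) : ℂ := wSigma L.ω₁ L.ω₂ z

/-- The zeta function of the lattice attached to a `PeriodPair`. -/
def zet (z : ℂ) : ℂ := wZeta L.ω₁ L.ω₂ z

/-- The Weierstrass factor `(1 - z/w) exp(z/w + z²/(2w²))`; it is `1` when `w = 0`. -/
def fac (w z : ℂ) : ℂ := (1 - z / w) * exp (z / w + z ^ 2 / (2 * w ^ 2))

lemma fac_zero_left (z : ℂ) : fac 0 z = 1 := by simp [fac]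

lemma latticePts_eq : LatticePts L.ω₁ L.ω₂ = L.lattice := by
  ext z
  simp only [LatticePts, Set.mem_ofPred_eq, SetLike.mem_coe, PeriodPair.mem_lattice, eq_comm]

/-- A sum or product over the nonzero lattice points extends to the whole lattice when the
term at `0` is trivial. -/
lemma tsum_latticePts' (f : ℂ → ℂ) (hf : f 0 = 0) :
    ∑' w : LatticePts' L.ω₁ L.ω₂, f w = ∑' l : L.lattice, f l := by
  rw [tsum_subtype (LatticePts' L.ω₁ L.ω₂) f]
  refine Eq.trans ?_ (tsum_subtype (L.lattice : Set ℂ) f).symm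
  congr 1
  ext w
  have h : w ∈ LatticePts' L.ω₁ L.ω₂ ↔ w ∈ (L.lattice : Set ℂ) ∧ w ≠ 0 := by
    rw [← latticePts_eq]; rfl
  by_cases hw : w = 0
  · subst hw; simp [Set.indicator, hf]
  · by_cases hl : w ∈ (L.lattice : Set ℂ)
    · rw [Set.indicator_of_mem hl, Set.indicator_of_mem (h.mpr ⟨hl, hw⟩)]
    · rw [Set.indicator_of_notMem hl, Set.indicator_of_notMem fun H ↦ hl (h.mp H).1]

lemma tprod_latticePts' (f : ℂ → ℂ) (hf : f 0 = 1) :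
    ∏' w : LatticePts' L.ω₁ L.ω₂, f w = ∏' l : L.lattice, f l := by
  rw [tprod_subtype (LatticePts' L.ω₁ L.ω₂) f]
  refine Eq.trans ?_ (tprod_subtype (L.lattice : Set ℂ) f).symm
  congr 1
  ext w
  have h : w ∈ LatticePts' L.ω₁ L.ω₂ ↔ w ∈ (L.lattice : Set ℂ) ∧ w ≠ 0 := by
    rw [← latticePts_eq]; rfl
  by_cases hw : w = 0
  · subst hw; simp [Set.mulIndicator, hf]
  · by_cases hl : w ∈ (L.lattice : Set ℂ)
    · rw [Set.mulIndicator_of_mem hl, Set.mulIndicator_of_mem (h.mpr ⟨hl, hw⟩)]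
    · rw [Set.mulIndicator_of_notMem hl, Set.mulIndicator_of_notMem fun H ↦ hl (h.mp H).1]

/-- The cofactor `σ(z)/z`, an entire function with value `1` at `0`. -/
def sigP (z : ℂ) : ℂ := ∏' l : L.lattice, fac l z

lemma sig_eq (z : ℂ) : sig L z = z * sigP L z := by
  rw [sig, wSigma, sigP, ← tprod_latticePts' L (fun w ↦ fac w z) (fac_zero_left z)]
  rfl

lemma g2_eq : g2 L.ω₁ L.ω₂ = L.g₂ := by
  rw [g2, PeriodPair.g₂, PeriodPair.G, tsum_latticePts' L (fun w ↦ (w ^ 4)⁻¹) (by simp)]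

lemma g3_eq : g3 L.ω₁ L.ω₂ = L.g₃ := by
  rw [g3, PeriodPair.g₃, PeriodPair.G, tsum_latticePts' L (fun w ↦ (w ^ 6)⁻¹) (by simp)]

/-- The Weierstrass factor of genus two is `1 + O(x³)`. -/
lemma norm_fac_sub_one_le {x : ℂ} (hx : ‖x‖ ≤ 1 / 2) :
    ‖(1 - x) * exp (x + x ^ 2 / 2) - 1‖ ≤ 3 * ‖x‖ ^ 3 := by
  set y := x + x ^ 2 / 2 with hy
  have h0 := norm_nonneg x
  have hyn : ‖y‖ ≤ 5 / 4 * ‖x‖ := by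
    calc ‖y‖ ≤ ‖x‖ + ‖x ^ 2 / 2‖ := norm_add_le _ _
      _ = ‖x‖ + ‖x‖ ^ 2 / 2 := by simp
      _ ≤ _ := by nlinarith
  have he := Complex.exp_bound (x := y) (by linarith) (n := 3) (by norm_num)
  simp only [Finset.sum_range_succ, Finset.range_zero, Finset.sum_empty] at he
  norm_num [Nat.factorial] at he
  have key : (1 - x) * exp y - 1 =
      (1 - x) * (exp y - (1 + y + y ^ 2 / 2)) + x ^ 3 * (-1 + (1 - x) * (1 / 2 + x / 8)) := by
    rw [hy]; ring
  have h1 : ‖1 - x‖ ≤ 3 / 2 := by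
    calc ‖1 - x‖ ≤ ‖(1 : ℂ)‖ + ‖x‖ := norm_sub_le _ _
      _ ≤ _ := by rw [norm_one]; linarith
  have h2 : ‖(1 / 2 + x / 8 : ℂ)‖ ≤ 5 / 8 := by
    calc ‖(1 / 2 + x / 8 : ℂ)‖ ≤ ‖(1 / 2 : ℂ)‖ + ‖x / 8‖ := norm_add_le _ _
      _ = 1 / 2 + ‖x‖ / 8 := by simp
      _ ≤ _ := by linarith
  have h3 : ‖(-1 + (1 - x) * (1 / 2 + x / 8) : ℂ)‖ ≤ 2 := by
    calc _ ≤ ‖(-1 : ℂ)‖ + ‖(1 - x) * (1 / 2 + x / 8)‖ := norm_add_le _ _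
      _ ≤ 1 + 3 / 2 * (5 / 8) := by
        rw [norm_neg, norm_one, norm_mul]
        gcongr
      _ ≤ 2 := by norm_num
  have h4 : ‖y‖ ^ 3 ≤ (5 / 4 * ‖x‖) ^ 3 := by gcongr
  rw [key]
  calc _ ≤ ‖(1 - x) * (exp y - (1 + y + y ^ 2 / 2))‖
        + ‖x ^ 3 * (-1 + (1 - x) * (1 / 2 + x / 8))‖ := norm_add_le _ _
    _ ≤ 3 / 2 * ((5 / 4 * ‖x‖) ^ 3 * (2 / 9)) + ‖x‖ ^ 3 * 2 := by
        rw [norm_mul, norm_mul, norm_pow]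
        gcongr
        exact he.trans (by gcongr)
    _ ≤ _ := by
        have : 0 ≤ ‖x‖ ^ 3 := by positivity
        nlinarith

lemma norm_fac_le (r : ℝ) (z : ℂ) (hz : ‖z‖ < r) (l : ℂ) (h : 2 * r ≤ ‖l‖) :
    ‖fac l z - 1‖ ≤ 3 * r ^ 3 * ‖l‖ ^ (-3 : ℝ) := by
  have hz0 := norm_nonneg z
  have hl : 0 < ‖l‖ := by linarith
  have hx : ‖z / l‖ ≤ r / ‖l‖ := by rw [norm_div]; gcongr
  have hr : r / ‖l‖ ≤ 1 / 2 := by rw [div_le_iff₀ hl]; linarith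
  have := norm_fac_sub_one_le (hx.trans hr)
  have e : fac l z = (1 - z / l) * exp (z / l + (z / l) ^ 2 / 2) := by
    rw [fac]; congr 3; ring
  rw [e]
  refine this.trans ?_
  calc 3 * ‖z / l‖ ^ 3 ≤ 3 * (r / ‖l‖) ^ 3 := by gcongr
    _ = 3 * r ^ 3 * (‖l‖ ^ 3)⁻¹ := by field
    _ = _ := by norm_cast

lemma summable_bound (c : ℝ) : Summable fun l : L.lattice ↦ c * ‖(l : ℂ)‖ ^ (-3 : ℝ) :=
  (ZLattice.summable_norm_rpow _ _ (by simp; norm_num)).mul_left _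

lemma eventually_le_norm (R : ℝ) : ∀ᶠ l : L.lattice in cofinite, R ≤ ‖(l : ℂ)‖ := by
  refine (isCompact_iff_finite.mp (isCompact_closedBall (0 : L.lattice) R)).subset ?_
  intro l hl
  simp only [Set.mem_compl_iff, Set.mem_ofPred_eq, not_le] at hl
  simpa using hl.le

lemma differentiable_fac (l : ℂ) : Differentiable ℂ (fac l) := by
  unfold fac; fun_prop

lemma hasProd_fac (r : ℝ) :
    HasProdLocallyUniformlyOn (fun (l : L.lattice) z ↦ fac l z) (sigP L) (Metric.ball 0 r) := by
  have := Summable.hasProdLocallyUniformlyOn_one_add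
    (f := fun (l : L.lattice) z ↦ fac l z - 1) (K := Metric.ball (0 : ℂ) r)
    Metric.isOpen_ball (summable_bound L (3 * r ^ 3)) ?_
    (fun l ↦ ((differentiable_fac l).sub_const 1).continuous.continuousOn)
  · simpa [sigP, Function.comp_def] using! this
  · filter_upwards [eventually_le_norm L (2 * r)] with l hl z hz
    exact norm_fac_le r z (by simpa using hz) l hl

lemma differentiable_sigP : Differentiable ℂ (sigP L) := by
  intro z
  have hz : z ∈ Metric.ball (0 : ℂ) (‖z‖ + 1) := by simp
  refine (DifferentiableOn.differentiableAt ?_ (Metric.isOpen_ball.mem_nhds hz))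
  refine (hasProd_fac L (‖z‖ + 1)).differentiableOn (.of_forall fun s ↦ ?_) Metric.isOpen_ball
  exact (Differentiable.fun_finsetProd fun (i : L.lattice) _ ↦
    differentiable_fac (i : ℂ)).differentiableOn

lemma differentiable_sig : Differentiable ℂ (sig L) := by
  have : sig L = fun z ↦ z * sigP L z := funext (sig_eq L)
  rw [this]
  exact differentiable_id.mul (differentiable_sigP L)

lemma summable_fac (z : ℂ) : Summable fun l : L.lattice ↦ ‖fac l z - 1‖ := by
  refine (summable_bound L (3 * (‖z‖ + 1) ^ 3)).of_norm_bounded_eventually ?_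
  filter_upwards [eventually_le_norm L (2 * (‖z‖ + 1))] with l hl
  rw [norm_norm]
  exact norm_fac_le _ z (by simp) l hl

lemma fac_ne_zero {l z : ℂ} (h : z ≠ l ∨ l = 0) : fac l z ≠ 0 := by
  rcases eq_or_ne l 0 with rfl | hl
  · simp [fac]
  · have hz : z ≠ l := by tauto
    refine mul_ne_zero ?_ (exp_ne_zero _)
    rw [sub_ne_zero]
    intro e
    exact hz ((div_eq_one_iff_eq hl).mp e.symm)

lemma sigP_ne_zero {z : ℂ} (hz : z ∉ L.lattice ∨ z = 0) : sigP L z ≠ 0 := by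
  have := tprod_one_add_ne_zero_of_summable (f := fun l : L.lattice ↦ fac l z - 1) (fun l ↦ ?_)
    (summable_fac L z)
  · simpa [sigP] using this
  · rw [add_sub_cancel]
    refine fac_ne_zero ?_
    rcases hz with hz | rfl
    · exact .inl fun e ↦ hz (e ▸ l.2)
    · exact (eq_or_ne (l : ℂ) 0).symm.imp Ne.symm id

lemma sig_ne_zero {z : ℂ} (hz : z ∉ L.lattice) : sig L z ≠ 0 := by
  rw [sig_eq]
  exact mul_ne_zero (fun e ↦ hz (e ▸ zero_mem _)) (sigP_ne_zero L (.inl hz))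

lemma sigP_zero : sigP L 0 = 1 := by simp [sigP, fac]

lemma sig_zero : sig L 0 = 0 := by simp [sig_eq]

lemma sig_neg (z : ℂ) : sig L (-z) = -sig L z := by
  rw [sig_eq, sig_eq, sigP, sigP, ← (Equiv.neg L.lattice).tprod_eq, neg_mul]
  congr! 4 with l
  simp [fac]

lemma deriv_sig_zero : deriv (sig L) 0 = 1 := by
  have : sig L = fun z ↦ z * sigP L z := funext (sig_eq L)
  have h := (hasDerivAt_id (0 : ℂ)).mul (differentiable_sigP L 0).hasDerivAt
  rw [this]
  simpa [sigP_zero] using! h.deriv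

lemma sig_eq_zero {z : ℂ} (hz : z ∈ L.lattice) : sig L z = 0 := by
  rcases eq_or_ne z 0 with rfl | h
  · exact sig_zero L
  rw [sig_eq, sigP, tprod_of_exists_eq_zero ⟨⟨z, hz⟩, by simp [fac, h]⟩, mul_zero]

/-- The summand of `ζ`. Its value at `l = 0` is `1/z`, thanks to `x/0 = 0`. -/
def zsum (l z : ℂ) : ℂ := 1 / (z - l) + 1 / l + z / l ^ 2

/-- Away from `l = 0` the summand equals `z² / (l²(z - l))`, hence is `O(|l|⁻³)`. -/
lemma norm_zsum_le (r : ℝ) (z : ℂ) (hz : ‖z‖ < r) (l : ℂ) (h : 2 * r ≤ ‖l‖) :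
    ‖zsum l z‖ ≤ 2 * r ^ 2 * ‖l‖ ^ (-3 : ℝ) := by
  have hz0 := norm_nonneg z
  have hl : 0 < ‖l‖ := by linarith
  have hl0 : l ≠ 0 := norm_pos_iff.mp hl
  have hzl : ‖l‖ / 2 ≤ ‖z - l‖ := by
    have := norm_sub_norm_le l z
    rw [norm_sub_rev] at this
    linarith
  have hzl0 : z - l ≠ 0 := norm_pos_iff.mp (by linarith)
  have e : zsum l z = z ^ 2 / (l ^ 2 * (z - l)) := by
    rw [zsum]; field_simp; ring
  rw [e, norm_div, norm_mul, norm_pow, norm_pow]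
  calc ‖z‖ ^ 2 / (‖l‖ ^ 2 * ‖z - l‖) ≤ r ^ 2 / (‖l‖ ^ 2 * (‖l‖ / 2)) := by gcongr
    _ = 2 * r ^ 2 * (‖l‖ ^ 3)⁻¹ := by field
    _ = _ := by norm_cast

lemma hasSumLocallyUniformly_zsum :
    HasSumLocallyUniformly (fun (l : L.lattice) z ↦ zsum l z)
      (fun z ↦ ∑' l : L.lattice, zsum l z) := by
  refine L.hasSumLocallyUniformly_aux (u := fun r l ↦ 2 * r ^ 2 * ‖l‖ ^ (-3 : ℝ)) _
    (fun r _ ↦ summable_bound L (2 * r ^ 2)) fun r hr ↦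
    Filter.eventually_atTop.mpr ⟨2 * r, ?_⟩
  rintro _ h z hz l rfl
  exact norm_zsum_le r z hz l h

lemma logDeriv_fac {l z : ℂ} (h : z ≠ l) (hl : l ≠ 0) : logDeriv (fac l) z = zsum l z := by
  have h1 : HasDerivAt (fun z : ℂ ↦ 1 - z / l) (-(1 / l)) z :=
    ((hasDerivAt_id z).div_const l).const_sub 1
  have h2 : HasDerivAt (fun z : ℂ ↦ z / l + z ^ 2 / (2 * l ^ 2))
      (1 / l + (2 * z) / (2 * l ^ 2)) z := by
    refine ((hasDerivAt_id z).div_const l).add (HasDerivAt.div_const ?_ _)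
    simpa using hasDerivAt_pow 2 z
  have h3 := h1.mul h2.cexp
  have e : deriv (fac l) z = _ := h3.deriv
  have hzl : z - l ≠ 0 := sub_ne_zero.mpr h
  have hlz : l - z ≠ 0 := sub_ne_zero.mpr h.symm
  rw [logDeriv_apply, e, fac, zsum, div_eq_iff]
  · have := exp_ne_zero (z / l + z ^ 2 / (2 * l ^ 2))
    field_simp
    ring
  · exact fac_ne_zero (.inl h)

/-- `ζ` is the sum of its partial fractions. -/
lemma zet_eq {z : ℂ} (hz : z ∉ L.lattice) : zet L z = ∑' l : L.lattice, zsum l z := by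
  have hz0 : z ≠ 0 := fun e ↦ hz (e ▸ zero_mem _)
  have hsum : Summable fun l : L.lattice ↦ zsum l z :=
    (hasSumLocallyUniformly_zsum L).hasSum.summable
  have hfac : ∀ l : L.lattice, logDeriv (fac l) z = if l = 0 then 0 else zsum l z := by
    intro l
    split_ifs with h
    · subst h
      have : fac ((0 : L.lattice) : ℂ) = fun _ ↦ 1 := funext fun z ↦ by simp [fac]
      rw [this]
      simp [logDeriv_apply]
    · exact logDeriv_fac (fun e ↦ hz (e ▸ l.2)) (by simpa using h)
  have hsum' : Summable fun l : L.lattice ↦ logDeriv (fac l) z := by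
    simp_rw [hfac]
    exact (hasSum_ite_sub_hasSum hsum.hasSum 0).summable
  have h1 : logDeriv (sigP L) z = ∑' l : L.lattice, logDeriv (fac l) z :=
    logDeriv_tprod_eq_tsum (s := Metric.ball 0 (‖z‖ + 1)) Metric.isOpen_ball (by simp)
      (fun l ↦ fac_ne_zero (.inl fun e ↦ hz (e ▸ l.2)))
      (fun l ↦ (differentiable_fac l).differentiableOn) hsum'
      ⟨_, hasProd_fac L _⟩ (sigP_ne_zero L (.inl hz))
  have h2 : logDeriv (sig L) z = 1 / z + logDeriv (sigP L) z := by
    have : sig L = fun z ↦ z * sigP L z := funext (sig_eq L)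
    rw [this, logDeriv_mul (f := fun z ↦ z) z hz0 (sigP_ne_zero L (.inl hz)) differentiableAt_fun_id
      (differentiable_sigP L z)]
    simp [logDeriv_apply]
  have h3 : zet L z = logDeriv (sig L) z := rfl
  rw [h3, h2, h1]
  simp_rw [hfac]
  rw [hsum.tsum_eq_add_tsum_ite 0]
  simp [zsum]

lemma hasDerivAt_sig {z : ℂ} (hz : z ∉ L.lattice) :
    HasDerivAt (sig L) (zet L z * sig L z) z := by
  have h : zet L z = deriv (sig L) z / sig L z := rfl
  rw [h, div_mul_cancel₀ _ (sig_ne_zero L hz)]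
  exact (differentiable_sig L z).hasDerivAt

lemma zet_neg (z : ℂ) : zet L (-z) = -zet L z := by
  have h : ∀ z, zet L z = deriv (sig L) z / sig L z := fun _ ↦ rfl
  have h2 : deriv (sig L) (-z) = deriv (sig L) z := by
    have := deriv_comp_neg (f := sig L) (x := z)
    simp only [sig_neg, deriv.fun_neg] at this
    exact (neg_injective this).symm
  rw [h, h, h2, sig_neg, div_neg]

/-- `ζ` takes the junk value `0` at its poles. -/
lemma zet_eq_zero {z : ℂ} (hz : z ∈ L.lattice) : zet L z = 0 := by
  have h : zet L z = deriv (sig L) z / sig L z := rfl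
  rw [h, sig_eq_zero L hz, div_zero]

lemma isOpen_compl : IsOpen (L.lattice : Set ℂ)ᶜ := L.isClosed_lattice.isOpen_compl

/-- `ζ' = -℘` away from the lattice. -/
lemma hasDerivAt_zet {z : ℂ} (hz : z ∉ L.lattice) : HasDerivAt (zet L) (-℘[L] z) z := by
  have hd : ∀ x ∈ (L.lattice : Set ℂ)ᶜ, ∀ l : L.lattice,
      HasDerivAt (zsum l) (-(1 / (x - l) ^ 2 - 1 / (l : ℂ) ^ 2)) x := by
    intro x hx l
    have hxl : x - l ≠ 0 := sub_ne_zero.mpr fun e ↦ hx (e ▸ l.2)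
    have h1 : HasDerivAt (fun z : ℂ ↦ 1 / (z - l)) (-1 / (x - l) ^ 2) x := by
      simpa [one_div, Function.comp_def] using! ((hasDerivAt_id x).sub_const (l : ℂ)).inv hxl
    convert! (h1.add_const (1 / (l : ℂ))).add ((hasDerivAt_id x).div_const ((l : ℂ) ^ 2)) using 1
    ring
  have hloc := (hasSumLocallyUniformly_zsum L).tendstoLocallyUniformlyOn (s := (L.lattice : Set ℂ)ᶜ)
  have hfin : ∀ s : Finset L.lattice, DifferentiableOn ℂ (fun z ↦ ∑ l ∈ s, zsum l z)
      (L.lattice : Set ℂ)ᶜ := fun s ↦ .fun_sum fun l _ ↦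
    fun x hx ↦ (hd x hx l).differentiableAt.differentiableWithinAt
  have hder := hloc.deriv (.of_forall fun s ↦ hfin s) (isOpen_compl L)
  have hdiff := hloc.differentiableOn (.of_forall fun s ↦ hfin s) (isOpen_compl L)
  have hnhds := (isOpen_compl L).mem_nhds hz
  have e1 := hder.tendsto_at hz
  have e2 : Tendsto (fun s : Finset L.lattice ↦ deriv (fun z ↦ ∑ l ∈ s, zsum l z) z) atTop
      (𝓝 (-℘[L] z)) := by
    refine (L.hasSum_weierstrassP z).neg.congr fun s ↦ ?_
    exact (HasDerivAt.fun_sum fun l _ ↦ hd z hz l).deriv.symm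
  have e3 := tendsto_nhds_unique e1 e2
  have h4 := (hdiff.differentiableAt hnhds).hasDerivAt
  rw [e3] at h4
  refine h4.congr_of_eventuallyEq ?_
  filter_upwards [hnhds] with x hx using zet_eq L hx

lemma wP_eq {z : ℂ} (hz : z ∉ L.lattice) : wP L.ω₁ L.ω₂ z = ℘[L] z := by
  have : wP L.ω₁ L.ω₂ z = -deriv (zet L) z := rfl
  rw [this, (hasDerivAt_zet L hz).deriv, neg_neg]

/-! ### Quasi-periods and the sigma identity -/

/-- The quasi-periods of the lattice. -/
def eta (l : ℂ) : ℂ := wEta L.ω₁ L.ω₂ l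

lemma isPreconnected_compl : IsPreconnected (L.lattice : Set ℂ)ᶜ := by
  refine (Set.Countable.isConnected_compl_of_one_lt_rank (by simp) ?_).isPreconnected
  exact Set.countable_coe_iff.mp (inferInstanceAs (Countable L.lattice))

lemma third_notMem : (L.ω₁ + L.ω₂) / 3 ∉ L.lattice := by
  have := (L.mul_ω₁_add_mul_ω₂_mem_lattice (α := 1 / 3) (β := 1 / 3)).not.mpr (by norm_num)
  convert this using 2
  push_cast
  ring

lemma add_notMem {z l : ℂ} (hz : z ∉ L.lattice) (hl : l ∈ L.lattice) : z + l ∉ L.lattice :=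
  fun h ↦ hz ((add_mem_cancel_right hl).mp h)

lemma neg_notMem {z : ℂ} (hz : z ∉ L.lattice) : -z ∉ L.lattice :=
  fun h ↦ hz (neg_mem_iff.mp h)

lemma wp_add {z l : ℂ} (hl : l ∈ L.lattice) : ℘[L] (z + l) = ℘[L] z :=
  L.weierstrassP_add_coe z ⟨l, hl⟩

lemma wp'_add {z l : ℂ} (hl : l ∈ L.lattice) : ℘'[L] (z + l) = ℘'[L] z :=
  L.derivWeierstrassP_add_coe z ⟨l, hl⟩

lemma zet_add {z l : ℂ} (hz : z ∉ L.lattice) (hl : l ∈ L.lattice) :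
    zet L (z + l) = zet L z + eta L l := by
  have hd : ∀ x ∈ (L.lattice : Set ℂ)ᶜ,
      HasDerivAt (fun x ↦ zet L (x + l) - zet L x) 0 x := by
    intro x hx
    have h1 := (hasDerivAt_zet L (add_notMem L hx hl)).comp_add_const x l
    rw [wp_add L hl] at h1
    simpa using! h1.sub (hasDerivAt_zet L hx)
  obtain ⟨a, ha⟩ := (isOpen_compl L).exists_is_const_of_deriv_eq_zero (isPreconnected_compl L)
    (fun x hx ↦ (hd x hx).differentiableAt.differentiableWithinAt) (fun x hx ↦ (hd x hx).deriv)
  have h1 := ha z hz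
  have h2 := ha _ (third_notMem L)
  have h3 : eta L l = zet L ((L.ω₁ + L.ω₂) / 3 + l) - zet L ((L.ω₁ + L.ω₂) / 3) := rfl
  rw [h3]
  linear_combination h1 - h2

lemma eta_add {l m : ℂ} (hl : l ∈ L.lattice) (hm : m ∈ L.lattice) :
    eta L (l + m) = eta L l + eta L m := by
  have h0 := third_notMem L
  have h1 := zet_add L h0 (add_mem hl hm)
  have h2 := zet_add L (add_notMem L h0 hl) hm
  have h3 := zet_add L h0 hl
  rw [← add_assoc] at h1
  linear_combination h2 + h3 - h1

/-- Quasi-periodicity of `σ`; the value of the constant `C` is not needed. -/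
lemma sig_add {l : ℂ} (hl : l ∈ L.lattice) :
    ∃ C : ℂ, C ≠ 0 ∧ ∀ z, sig L (z + l) = C * exp (eta L l * z) * sig L z := by
  have hd : ∀ x ∈ (L.lattice : Set ℂ)ᶜ,
      HasDerivAt (fun x ↦ sig L (x + l) / (exp (eta L l * x) * sig L x)) 0 x := by
    intro x hx
    have h1 := (hasDerivAt_sig L (add_notMem L hx hl)).comp_add_const x l
    have h2 : HasDerivAt (fun x ↦ exp (eta L l * x)) (exp (eta L l * x) * eta L l) x := by
      simpa using! ((hasDerivAt_id x).const_mul (eta L l)).cexp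
    have hne : exp (eta L l * x) * sig L x ≠ 0 := mul_ne_zero (exp_ne_zero _) (sig_ne_zero L hx)
    convert! h1.div (h2.mul (hasDerivAt_sig L hx)) hne using 1
    rw [eq_comm, div_eq_zero_iff]
    left
    rw [zet_add L hx hl]
    simp only [Pi.mul_apply]
    ring
  obtain ⟨C, hC⟩ := (isOpen_compl L).exists_is_const_of_deriv_eq_zero (isPreconnected_compl L)
    (fun x hx ↦ (hd x hx).differentiableAt.differentiableWithinAt) (fun x hx ↦ (hd x hx).deriv)
  have h0 := third_notMem L
  refine ⟨C, ?_, fun z ↦ ?_⟩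
  · rw [← hC _ h0]
    exact div_ne_zero (sig_ne_zero L (add_notMem L h0 hl))
      (mul_ne_zero (exp_ne_zero _) (sig_ne_zero L h0))
  · by_cases hz : z ∈ L.lattice
    · rw [sig_eq_zero L hz, sig_eq_zero L (add_mem hz hl), mul_zero]
    · have := hC z hz
      rw [div_eq_iff (mul_ne_zero (exp_ne_zero _) (sig_ne_zero L hz))] at this
      rw [this, mul_assoc]

open Classical in
/-- Both sides of `sig_mul_sig` are compared through this elliptic function of `u`, whose only
possible poles are the lattice points; `c` is the value that removes these singularities. -/
def cmp (v c u : ℂ) : ℂ :=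
  if u ∈ L.lattice then c else
    sig L (u + v) * sig L (u - v) / sig L u ^ 2 + (℘[L] u - ℘[L] v) * sig L v ^ 2

lemma cmp_add (v c u : ℂ) {l : ℂ} (hl : l ∈ L.lattice) : cmp L v c (u + l) = cmp L v c u := by
  by_cases hu : u ∈ L.lattice
  · rw [cmp, cmp, if_pos hu, if_pos (add_mem hu hl)]
  rw [cmp, cmp, if_neg hu, if_neg (add_notMem L hu hl), wp_add L hl]
  obtain ⟨C, hC, h⟩ := sig_add L hl
  congr 1
  rw [show u + l + v = u + v + l by ring, show u + l - v = u - v + l by ring, h, h, h]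
  have e : exp (eta L l * (u + v)) * exp (eta L l * (u - v)) = exp (eta L l * u) ^ 2 := by
    rw [← exp_add, ← exp_nat_mul]; congr 1; push_cast; ring
  have h1 := exp_ne_zero (eta L l * u)
  have h2 := sig_ne_zero L hu
  rw [div_eq_div_iff (by positivity) (by positivity)]
  linear_combination C ^ 2 * sig L (u + v) * sig L (u - v) * sig L u ^ 2 * e

/-- After multiplication by `u²`, the function `cmp L v c` becomes an even analytic function near `0`
that vanishes at `0`, hence to order at least two. -/
lemma exists_analyticAt_cmp (v : ℂ) : ∃ c, AnalyticAt ℂ (cmp L v c) 0 := by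
  set k : ℂ → ℂ := fun u ↦ sig L (u + v) * sig L (u - v) / sigP L u ^ 2 +
    (1 + u ^ 2 * ℘[L - (0 : ℂ)] u - u ^ 2 * ℘[L] v) * sig L v ^ 2 with hk
  have hS : ∀ z, AnalyticAt ℂ (sig L) z := fun z ↦ (differentiable_sig L).analyticAt z
  have hP : AnalyticAt ℂ (sigP L) 0 := (differentiable_sigP L).analyticAt 0
  have hE : AnalyticAt ℂ ℘[L - (0 : ℂ)] 0 := L.analyticAt_weierstrassPExcept 0
  have h1 : AnalyticAt ℂ (fun u ↦ sig L (u + v)) 0 :=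
    (hS (0 + v)).comp (f := fun u ↦ u + v) (by fun_prop)
  have h2 : AnalyticAt ℂ (fun u ↦ sig L (u - v)) 0 :=
    (hS (0 - v)).comp (f := fun u ↦ u - v) (by fun_prop)
  have hka : AnalyticAt ℂ k 0 := by
    refine ((h1.mul h2).div (hP.pow 2) ?_).add ?_
    · simp [sigP_zero]
    · fun_prop
  have hsP : ∀ u, sigP L (-u) = sigP L u := by
    intro u
    rcases eq_or_ne u 0 with rfl | hu
    · simp
    · have := sig_neg L u
      rw [sig_eq, sig_eq] at this
      exact mul_left_cancel₀ (neg_ne_zero.mpr hu) (by linear_combination this)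
  have hkeven : ∀ u, k (-u) = k u := by
    intro u
    have e1 : sig L (-u + v) = -sig L (u - v) := by rw [← sig_neg]; ring_nf
    have e2 : sig L (-u - v) = -sig L (u + v) := by rw [← sig_neg]; ring_nf
    simp only [hk, hsP, e1, e2, weierstrassPExcept_neg, neg_zero]
    ring
  have hord : (2 : ℕ) ≤ analyticOrderAt k 0 := by
    refine (natCast_le_analyticOrderAt_iff_iteratedDeriv_eq_zero hka).mpr fun i hi ↦ ?_
    interval_cases i
    · simp [hk, sigP_zero, sig_neg]
      ring
    · have := iteratedDeriv_comp_neg 1 k 0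
      simp only [hkeven] at this
      simp at this
      rw [iteratedDeriv_one]
      linear_combination this / 2
  obtain ⟨g, hg, hgk⟩ := (natCast_le_analyticOrderAt hka).mp hord
  refine ⟨g 0, hg.congr ?_⟩
  filter_upwards [hgk, L.compl_lattice_sdiff_singleton_mem_nhds 0] with u hu hu'
  by_cases hu0 : u = 0
  · simp [cmp, hu0]
  have hul : u ∉ L.lattice := fun h ↦ hu' ⟨h, hu0⟩
  have hwp := L.weierstrassPExcept_add 0 u
  simp only [ZeroMemClass.coe_zero, sub_zero] at hwp
  have hsn := sigP_ne_zero L (.inl hul)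
  rw [cmp, if_neg hul]
  refine mul_left_cancel₀ (pow_ne_zero 2 hu0) ?_
  simp only [sub_zero, smul_eq_mul] at hu
  rw [← hu, hk, sig_eq L u, ← hwp]
  field_simp
  simp
  ring

/-- The classical identity `σ(u+v) σ(u-v) = -(℘(u) - ℘(v)) σ(u)² σ(v)²`. -/
lemma sig_mul_sig {u v : ℂ} (hu : u ∉ L.lattice) (hv : v ∉ L.lattice) :
    sig L (u + v) * sig L (u - v) = -(℘[L] u - ℘[L] v) * sig L u ^ 2 * sig L v ^ 2 := by
  obtain ⟨c, hc⟩ := exists_analyticAt_cmp L v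
  have hdiff : Differentiable ℂ (cmp L v c) := by
    intro x
    by_cases hx : x ∈ L.lattice
    · have h : cmp L v c = fun y ↦ cmp L v c (y - x) := by
        ext y
        rw [← cmp_add L v c (y - x) hx, sub_add_cancel]
      rw [h]
      rw [← sub_self x] at hc
      exact hc.differentiableAt.comp x (f := fun y ↦ y - x) (by fun_prop)
    · have h1 : DifferentiableAt ℂ (fun u ↦ sig L (u + v) * sig L (u - v) / sig L u ^ 2 +
          (℘[L] u - ℘[L] v) * sig L v ^ 2) x := by
        have hs := differentiable_sig L
        have hwp := (L.analyticOnNhd_weierstrassP x hx).differentiableAt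
        have := sig_ne_zero L hx
        have e1 : DifferentiableAt ℂ (fun u ↦ sig L (u + v)) x :=
          (hs (x + v)).comp x (f := fun u ↦ u + v) (by fun_prop)
        have e2 : DifferentiableAt ℂ (fun u ↦ sig L (u - v)) x :=
          (hs (x - v)).comp x (f := fun u ↦ u - v) (by fun_prop)
        refine ((e1.mul e2).div ((hs x).pow 2) (pow_ne_zero 2 this)).add ?_
        exact (hwp.sub_const _).mul_const _
      refine h1.congr_of_eventuallyEq ?_
      filter_upwards [(isOpen_compl L).mem_nhds hx] with y hy
      exact if_neg hy
  have hconst := hdiff.apply_eq_apply_of_bounded (IsZLattice.isCompact_range_of_periodic L.lattice _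
    hdiff.continuous fun z w hw ↦ cmp_add L v c z hw).isBounded u v
  rw [cmp, cmp, if_neg hu, if_neg hv, sub_self, sub_self, sig_zero] at hconst
  have h2 := sig_ne_zero L hu
  have h3 : sig L (u + v) * sig L (u - v) / sig L u ^ 2 = -(℘[L] u - ℘[L] v) * sig L v ^ 2 := by
    linear_combination hconst
  rw [div_eq_iff (by positivity)] at h3
  rw [h3]
  ring

/-! ### Addition and duplication theorems -/

lemma hasDerivAt_wp {z : ℂ} (hz : z ∉ L.lattice) : HasDerivAt ℘[L] (℘'[L] z) z := by
  rw [← L.deriv_weierstrassP]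
  exact (L.analyticOnNhd_weierstrassP z hz).differentiableAt.hasDerivAt

lemma wp_sub_ne_zero {u v : ℂ} (hu : u ∉ L.lattice) (hv : v ∉ L.lattice)
    (ha : u + v ∉ L.lattice) (hs : u - v ∉ L.lattice) : ℘[L] u - ℘[L] v ≠ 0 := by
  intro h
  have := sig_mul_sig L hu hv
  rw [h, neg_zero, zero_mul, zero_mul] at this
  exact mul_ne_zero (sig_ne_zero L ha) (sig_ne_zero L hs) this

/-- The derivative of `sig_mul_sig` at `u = v`. It shows that `℘'` has no zeros besides the half
periods. -/
lemma sig_two_mul {v : ℂ} (hv : v ∉ L.lattice) :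
    sig L (2 * v) = -℘'[L] v * sig L v ^ 4 := by
  have h1 : HasDerivAt (fun u ↦ sig L (u + v) * sig L (u - v)) (sig L (2 * v)) v := by
    have e1 := ((differentiable_sig L (v + v)).hasDerivAt).comp_add_const v v
    have e2 := ((differentiable_sig L (v - v)).hasDerivAt).comp_sub_const v v
    convert! e1.mul e2 using 1
    simp [sig_zero, deriv_sig_zero, two_mul]
  have h2 : HasDerivAt (fun u ↦ -(℘[L] u - ℘[L] v) * sig L u ^ 2 * sig L v ^ 2)
      (-℘'[L] v * sig L v ^ 4) v := by
    have e := ((((hasDerivAt_wp L hv).sub_const (℘[L] v)).neg.mul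
      ((hasDerivAt_sig L hv).pow 2)).mul_const (sig L v ^ 2))
    convert! e using 1
    simp
    ring
  refine h1.unique (h2.congr_of_eventuallyEq ?_)
  filter_upwards [(isOpen_compl L).mem_nhds hv] with u hu
  exact sig_mul_sig L hu hv

lemma wp'_ne_zero {v : ℂ} (hv : 2 * v ∉ L.lattice) : ℘'[L] v ≠ 0 := by
  intro h
  have hv' : v ∉ L.lattice := fun hv' ↦ hv (two_mul v ▸ add_mem hv' hv')
  have := sig_two_mul L hv'
  rw [h, neg_zero, zero_mul] at this
  exact sig_ne_zero L hv this

lemma wp'_eq_zero {v : ℂ} (hv : 2 * v ∈ L.lattice) : ℘'[L] v = 0 := by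
  have h := wp'_add L (z := -v) hv
  rw [show -v + 2 * v = v by ring, derivWeierstrassP_neg] at h
  linear_combination h / 2

lemma two_third_notMem : 2 * ((L.ω₁ + L.ω₂) / 3) ∉ L.lattice := by
  have := (L.mul_ω₁_add_mul_ω₂_mem_lattice (α := 2 / 3) (β := 2 / 3)).not.mpr (by norm_num)
  convert this using 2
  push_cast
  ring

/-- The second order equation `℘'' = 6℘² - g₂/2`. -/
lemma hasDerivAt_wp' {z : ℂ} (hz : z ∉ L.lattice) :
    HasDerivAt ℘'[L] (6 * ℘[L] z ^ 2 - L.g₂ / 2) z := by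
  have hP := L.analyticOnNhd_weierstrassP
  have hP' := L.analyticOnNhd_derivWeierstrassP
  have hf : AnalyticOnNhd ℂ (fun z ↦ deriv ℘'[L] z - (6 * ℘[L] z ^ 2 - L.g₂ / 2))
      (L.lattice : Set ℂ)ᶜ :=
    hP'.deriv.sub ((analyticOnNhd_const.mul (hP.pow 2)).sub analyticOnNhd_const)
  have hmul : ∀ x ∈ (L.lattice : Set ℂ)ᶜ,
      (deriv ℘'[L] x - (6 * ℘[L] x ^ 2 - L.g₂ / 2)) * ℘'[L] x = 0 := by
    intro x hx
    have d' := (hP' x hx).differentiableAt.hasDerivAt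
    have d := hasDerivAt_wp L hx
    have e1 := d'.pow 2
    have e2 := (((d.pow 3).const_mul 4).sub (d.const_mul L.g₂)).sub_const L.g₃
    have := e1.unique (e2.congr_of_eventuallyEq (by
      filter_upwards [(isOpen_compl L).mem_nhds hx] with u hu
      simpa using L.derivWeierstrassP_sq u hu))
    simp at this
    linear_combination this / 2
  have h0 := hf.eq_zero_or_eq_zero_of_mul_eq_zero hP' hmul (isPreconnected_compl L)
  have h1 : deriv ℘'[L] z = 6 * ℘[L] z ^ 2 - L.g₂ / 2 := by
    rcases h0 with h0 | h0
    · exact sub_eq_zero.mp (h0 z hz)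
    · exact absurd (h0 _ (third_notMem L)) (wp'_ne_zero L (two_third_notMem L))
  rw [← h1]
  exact (hP' z hz).differentiableAt.hasDerivAt

/-- The logarithmic derivative of `sig_mul_sig` in `u`. -/
lemma zet_add_zet_sub {u v : ℂ} (hu : u ∉ L.lattice) (hv : v ∉ L.lattice)
    (ha : u + v ∉ L.lattice) (hs : u - v ∉ L.lattice) :
    zet L (u + v) + zet L (u - v) = ℘'[L] u / (℘[L] u - ℘[L] v) + 2 * zet L u := by
  have h1 := ((hasDerivAt_sig L ha).comp_add_const u v).mul
    ((hasDerivAt_sig L hs).comp_sub_const u v)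
  have h2 := ((((hasDerivAt_wp L hu).sub_const (℘[L] v)).neg.mul
      ((hasDerivAt_sig L hu).pow 2)).mul_const (sig L v ^ 2))
  have := h1.unique (h2.congr_of_eventuallyEq (by
    filter_upwards [(isOpen_compl L).mem_nhds hu] with x hx
    exact sig_mul_sig L hx hv))
  have hne := wp_sub_ne_zero L hu hv ha hs
  have h0 := sig_mul_sig L hu hv
  have n1 := sig_ne_zero L hu
  have n2 := sig_ne_zero L hv
  simp at this
  field_simp
  refine mul_right_cancel₀ (mul_ne_zero (pow_ne_zero 2 n1) (pow_ne_zero 2 n2)) ?_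
  linear_combination -this + (zet L (u + v) + zet L (u - v)) * h0

/-- The addition theorem for `ζ`. -/
lemma zet_add_eq {u v : ℂ} (hu : u ∉ L.lattice) (hv : v ∉ L.lattice)
    (ha : u + v ∉ L.lattice) (hs : u - v ∉ L.lattice) :
    zet L (u + v) = zet L u + zet L v + (℘'[L] u - ℘'[L] v) / (2 * (℘[L] u - ℘[L] v)) := by
  have hs' : v - u ∉ L.lattice := by simpa using neg_notMem L hs
  have h1 := zet_add_zet_sub L hu hv ha hs
  have h2 := zet_add_zet_sub L hv hu (by rwa [add_comm]) hs'
  rw [add_comm v u, ← neg_sub u v, zet_neg] at h2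
  have hne := wp_sub_ne_zero L hu hv ha hs
  have hne' : ℘[L] v - ℘[L] u ≠ 0 := by rw [← neg_sub]; exact neg_ne_zero.mpr hne
  have h3 : ℘'[L] v / (℘[L] v - ℘[L] u) = - (℘'[L] v / (℘[L] u - ℘[L] v)) := by
    rw [← neg_sub, div_neg]
  have h4 : (℘'[L] u - ℘'[L] v) / (2 * (℘[L] u - ℘[L] v)) =
    (℘'[L] u / (℘[L] u - ℘[L] v) - ℘'[L] v / (℘[L] u - ℘[L] v)) / 2 := by field_simp
  rw [h4]
  linear_combination (h1 + h2 + h3) / 2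

/-- The numerator `℘''(u)(℘(u) - ℘(v)) - (℘'(u) - ℘'(v))℘'(u)` of the derivative of the slope,
with `x, y, c, d` in place of `℘(u), ℘'(u), ℘(v), ℘'(v)` and `g` in place of `g₂`. -/
def addN {F : Type*} [Field F] (g x y c d : F) : F := (6 * x ^ 2 - g / 2) * (x - c) - (y - d) * y

/-- The rational function giving `℘(u+v)`, with the notation of `addN`. -/
def addX {F : Type*} [Field F] (g x y c d : F) : F := x - addN g x y c d / (2 * (x - c) ^ 2)

/-- The rational function giving `℘'(u+v)`, with the notation of `addN`. -/
def addY {F : Type*} [Field F] (g x y c d : F) : F :=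
  y - ((12 * x * y * (x - c) - (y - d) * (6 * x ^ 2 - g / 2)) * (x - c) ^ 2
    - addN g x y c d * (2 * (x - c) * y)) / (2 * (x - c) ^ 4)

/-- The rational function giving `℘(2u)`, with the notation of `addN`. -/
def dblX {F : Type*} [Field F] (g x y : F) : F :=
  x - (12 * x * y ^ 2 - (6 * x ^ 2 - g / 2) ^ 2) / (4 * y ^ 2)

/-- The rational function giving `℘'(2u)`, with the notation of `addN`. -/
def dblY {F : Type*} [Field F] (g x y : F) : F :=
  (y - (12 * y ^ 3 * y ^ 2 - (12 * x * y ^ 2 - (6 * x ^ 2 - g / 2) ^ 2) *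
    (2 * y * (6 * x ^ 2 - g / 2))) / (4 * y ^ 4)) / 2

lemma eventually_gen {u v : ℂ} (hu : u ∉ L.lattice)
    (ha : u + v ∉ L.lattice) (hs : u - v ∉ L.lattice) :
    ∀ᶠ x in 𝓝 u, x ∉ L.lattice ∧ x + v ∉ L.lattice ∧ x - v ∉ L.lattice := by
  have h1 : ContinuousAt (fun x : ℂ ↦ x + v) u := by fun_prop
  have h2 : ContinuousAt (fun x : ℂ ↦ x - v) u := by fun_prop
  filter_upwards [(isOpen_compl L).mem_nhds hu, h1 ((isOpen_compl L).mem_nhds ha),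
    h2 ((isOpen_compl L).mem_nhds hs)] with x e1 e2 e3 using ⟨e1, e2, e3⟩

/-- The addition theorem for `℘`. -/
lemma wp_add_eq {u v : ℂ} (hu : u ∉ L.lattice) (hv : v ∉ L.lattice)
    (ha : u + v ∉ L.lattice) (hs : u - v ∉ L.lattice) :
    ℘[L] (u + v) = addX L.g₂ (℘[L] u) (℘'[L] u) (℘[L] v) (℘'[L] v) := by
  have hne := wp_sub_ne_zero L hu hv ha hs
  have h1 := (hasDerivAt_zet L ha).comp_add_const u v
  have h2 := ((hasDerivAt_zet L hu).add_const (zet L v)).add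
    (((hasDerivAt_wp' L hu).sub_const (℘'[L] v)).div
      (((hasDerivAt_wp L hu).sub_const (℘[L] v)).const_mul 2) (mul_ne_zero two_ne_zero hne))
  have := h1.unique (h2.congr_of_eventuallyEq (by
    filter_upwards [eventually_gen L hu ha hs] with x hx
    exact zet_add_eq L hx.1 hv hx.2.1 hx.2.2))
  rw [← neg_inj, this, addX, addN]
  field_simp
  ring

/-- The addition theorem for `℘'`. -/
lemma wp'_add_eq {u v : ℂ} (hu : u ∉ L.lattice) (hv : v ∉ L.lattice)
    (ha : u + v ∉ L.lattice) (hs : u - v ∉ L.lattice) :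
    ℘'[L] (u + v) = addY L.g₂ (℘[L] u) (℘'[L] u) (℘[L] v) (℘'[L] v) := by
  have hne := wp_sub_ne_zero L hu hv ha hs
  have h1 := (hasDerivAt_wp L ha).comp_add_const u v
  have d := hasDerivAt_wp L hu
  have d' := hasDerivAt_wp' L hu
  have h2 := d.sub (((((((d.pow 2).const_mul 6).sub_const (L.g₂ / 2)).mul
    (d.sub_const (℘[L] v))).sub ((d'.sub_const (℘'[L] v)).mul d'))).div
      (((d.sub_const (℘[L] v)).pow 2).const_mul 2) (mul_ne_zero two_ne_zero (pow_ne_zero 2 hne)))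
  have := h1.unique (h2.congr_of_eventuallyEq (by
    filter_upwards [eventually_gen L hu ha hs] with x hx
    exact wp_add_eq L hx.1 hv hx.2.1 hx.2.2))
  rw [this, addY, addN]
  simp
  field_simp
  ring

lemma eventually_dbl {u : ℂ} (h2 : 2 * u ∉ L.lattice) :
    ∀ᶠ x in 𝓝 u, x ∉ L.lattice ∧ 2 * x ∉ L.lattice := by
  have hu : u ∉ L.lattice := fun h ↦ h2 (two_mul u ▸ add_mem h h)
  have h1 : ContinuousAt (fun x : ℂ ↦ 2 * x) u := by fun_prop
  filter_upwards [(isOpen_compl L).mem_nhds hu, h1 ((isOpen_compl L).mem_nhds h2)]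
    with x e1 e2 using ⟨e1, e2⟩

lemma comp_two_mul {f : ℂ → ℂ} {f' u : ℂ} (h : HasDerivAt f f' (2 * u)) :
    HasDerivAt (fun x ↦ f (2 * x)) (2 * f') u := by
  have := h.comp u ((hasDerivAt_id u).const_mul 2)
  simpa [Function.comp_def, mul_comm] using! this

/-- The duplication formula for `ζ`. -/
lemma zet_dbl_eq {u : ℂ} (h2 : 2 * u ∉ L.lattice) :
    zet L (2 * u) = 2 * zet L u + (6 * ℘[L] u ^ 2 - L.g₂ / 2) / (2 * ℘'[L] u) := by
  have hu : u ∉ L.lattice := fun h ↦ h2 (two_mul u ▸ add_mem h h)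
  have hne := wp'_ne_zero L h2
  have e1 := comp_two_mul (hasDerivAt_sig L h2)
  have e2 := (hasDerivAt_wp' L hu).neg.mul ((hasDerivAt_sig L hu).pow 4)
  have := e1.unique (e2.congr_of_eventuallyEq (by
    filter_upwards [eventually_dbl L h2] with x hx
    exact sig_two_mul L hx.1))
  simp at this
  have h0 := sig_two_mul L hu
  have n1 := sig_ne_zero L hu
  field_simp
  refine mul_right_cancel₀ (pow_ne_zero 4 n1) ?_
  linear_combination 2 * (-this + 2 * zet L (2 * u) * h0)

/-- The duplication formula for `℘`. -/
lemma wp_dbl_eq {u : ℂ} (h2 : 2 * u ∉ L.lattice) :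
    ℘[L] (2 * u) = dblX L.g₂ (℘[L] u) (℘'[L] u) := by
  have hu : u ∉ L.lattice := fun h ↦ h2 (two_mul u ▸ add_mem h h)
  have hne := wp'_ne_zero L h2
  have d := hasDerivAt_wp L hu
  have d' := hasDerivAt_wp' L hu
  have e1 := comp_two_mul (hasDerivAt_zet L h2)
  have e2 := ((hasDerivAt_zet L hu).const_mul 2).add
    ((((d.pow 2).const_mul 6).sub_const (L.g₂ / 2)).div (d'.const_mul 2)
      (mul_ne_zero two_ne_zero hne))
  have := e1.unique (e2.congr_of_eventuallyEq (by
    filter_upwards [eventually_dbl L h2] with x hx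
    exact zet_dbl_eq L hx.2))
  have h3 : ℘[L] (2 * u) = -(2 * -℘[L] (2 * u)) / 2 := by ring
  rw [h3, this, dblX]
  simp
  field_simp
  ring

/-- The duplication formula for `℘'`. -/
lemma wp'_dbl_eq {u : ℂ} (h2 : 2 * u ∉ L.lattice) :
    ℘'[L] (2 * u) = dblY L.g₂ (℘[L] u) (℘'[L] u) := by
  have hu : u ∉ L.lattice := fun h ↦ h2 (two_mul u ▸ add_mem h h)
  have hne := wp'_ne_zero L h2
  have d := hasDerivAt_wp L hu
  have d' := hasDerivAt_wp' L hu
  have e1 := comp_two_mul (hasDerivAt_wp L h2)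
  have e2 := d.sub ((((d.const_mul 12).mul (d'.pow 2)).sub
    ((((d.pow 2).const_mul 6).sub_const (L.g₂ / 2)).pow 2)).div
      ((d'.pow 2).const_mul 4) (mul_ne_zero (by norm_num) (pow_ne_zero 2 hne)))
  have := e1.unique (e2.congr_of_eventuallyEq (by
    filter_upwards [eventually_dbl L h2] with x hx
    exact wp_dbl_eq L hx.2))
  have h3 : ℘'[L] (2 * u) = (2 * ℘'[L] (2 * u)) / 2 := by ring
  rw [h3, this, dblY]
  simp
  field_simp
  ring

/-! ### Rational points and the correspondence of two embeddings -/

lemma wp_coe {l : ℂ} (hl : l ∈ L.lattice) : ℘[L] l = 0 := L.weierstrassP_coe ⟨l, hl⟩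

lemma wp'_coe {l : ℂ} (hl : l ∈ L.lattice) : ℘'[L] l = 0 := L.derivWeierstrassP_coe ⟨l, hl⟩

lemma wp_eq_of_sub {u v : ℂ} (h : u - v ∈ L.lattice) : ℘[L] u = ℘[L] v := by
  simpa using wp_add L (z := v) h

lemma wp'_eq_of_sub {u v : ℂ} (h : u - v ∈ L.lattice) : ℘'[L] u = ℘'[L] v := by
  simpa using wp'_add L (z := v) h

lemma wp_eq_of_add {u v : ℂ} (h : u + v ∈ L.lattice) : ℘[L] u = ℘[L] v := by
  simpa using wp_add L (z := -v) h

lemma wp'_eq_of_add {u v : ℂ} (h : u + v ∈ L.lattice) : ℘'[L] u = -℘'[L] v := by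
  simpa using wp'_add L (z := -v) h

lemma add_or_sub_mem {u v : ℂ} (hu : u ∉ L.lattice) (hv : v ∉ L.lattice) (h : ℘[L] u = ℘[L] v) :
    u + v ∈ L.lattice ∨ u - v ∈ L.lattice := by
  by_contra! hc
  exact wp_sub_ne_zero L hu hv hc.1 hc.2 (sub_eq_zero.mpr h)

lemma add_mem_of_eq {u v : ℂ} (hu : u ∉ L.lattice) (hv : v ∉ L.lattice) (h : ℘[L] u = ℘[L] v)
    (h' : ℘'[L] u = -℘'[L] v) : u + v ∈ L.lattice := by
  rcases add_or_sub_mem L hu hv h with h1 | h1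
  · exact h1
  · have h2 := wp'_eq_of_sub L h1
    have h3 : ℘'[L] u = 0 := by linear_combination (h' + h2) / 2
    have h4 : 2 * u ∈ L.lattice := by
      by_contra hc
      exact wp'_ne_zero L hc h3
    convert sub_mem h4 h1 using 1
    ring

lemma sub_mem_of_eq {u v : ℂ} (hu : u ∉ L.lattice) (hv : v ∉ L.lattice) (h : ℘[L] u = ℘[L] v)
    (h' : ℘'[L] u = ℘'[L] v) : u - v ∈ L.lattice := by
  rw [sub_eq_add_neg]
  exact add_mem_of_eq L hu (neg_notMem L hv) (by rwa [weierstrassP_neg])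
    (by rw [derivWeierstrassP_neg, h', neg_neg])

/-- The correspondence on `ℂ/Λ × ℂ/Λ` attached to two embeddings `ι, σ` of a field `F`: the pairs
`(u, v)` whose images on the cubic are `ι` and `σ` of one and the same `F`-rational point, the
point at infinity included. -/
def Rel {F : Type*} [Field F] (ι σ : F →+* ℂ) (u v : ℂ) : Prop :=
  (u ∈ L.lattice ∧ v ∈ L.lattice) ∨ (u ∉ L.lattice ∧ v ∉ L.lattice ∧
    ∃ a b, ℘[L] u = ι a ∧ ℘'[L] u = ι b ∧ ℘[L] v = σ a ∧ ℘'[L] v = σ b)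

section Rel

variable {L} {F : Type*} [Field F] {ι σ : F →+* ℂ}

lemma Rel.add_lattice {u v l m : ℂ} (h : Rel L ι σ u v) (hl : l ∈ L.lattice)
    (hm : m ∈ L.lattice) : Rel L ι σ (u + l) (v + m) := by
  rcases h with ⟨hu, hv⟩ | ⟨hu, hv, a, b, h1, h2, h3, h4⟩
  · exact .inl ⟨add_mem hu hl, add_mem hv hm⟩
  · refine .inr ⟨add_notMem L hu hl, add_notMem L hv hm, a, b, ?_⟩
    rw [wp_add L hl, wp_add L hm, wp'_add L hl, wp'_add L hm]
    exact ⟨h1, h2, h3, h4⟩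

lemma Rel.neg {u v : ℂ} (h : Rel L ι σ u v) : Rel L ι σ (-u) (-v) := by
  rcases h with ⟨hu, hv⟩ | ⟨hu, hv, a, b, h1, h2, h3, h4⟩
  · exact .inl ⟨neg_mem hu, neg_mem hv⟩
  · refine .inr ⟨neg_notMem L hu, neg_notMem L hv, a, -b, ?_⟩
    simp [weierstrassP_neg, derivWeierstrassP_neg, *]

/-- The correspondence is a subgroup: the group law on the cubic is given by rational functions
with coefficients in any field containing `g₂`. -/
lemma Rel.add {g : F} (hι : ι g = L.g₂) (hσ : σ g = L.g₂) {u₁ v₁ u₂ v₂ : ℂ}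
    (h₁ : Rel L ι σ u₁ v₁) (h₂ : Rel L ι σ u₂ v₂) : Rel L ι σ (u₁ + u₂) (v₁ + v₂) := by
  rcases id h₁ with ⟨hu₁, hv₁⟩ | ⟨hu₁, hv₁, a₁, b₁, p₁, p₁', q₁, q₁'⟩
  · rw [add_comm u₁, add_comm v₁]
    exact h₂.add_lattice hu₁ hv₁
  rcases id h₂ with ⟨hu₂, hv₂⟩ | ⟨hu₂, hv₂, a₂, b₂, p₂, p₂', q₂, q₂'⟩
  · exact h₁.add_lattice hu₂ hv₂
  by_cases ha : a₁ = a₂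
  · subst ha
    have hp : ℘[L] u₁ = ℘[L] u₂ := by rw [p₁, p₂]
    have hq : ℘[L] v₁ = ℘[L] v₂ := by rw [q₁, q₂]
    by_cases hb : b₁ = -b₂
    · subst hb
      exact .inl ⟨add_mem_of_eq L hu₁ hu₂ hp (by rw [p₁', p₂', map_neg]),
        add_mem_of_eq L hv₁ hv₂ hq (by rw [q₁', q₂', map_neg])⟩
    · have hus : u₁ - u₂ ∈ L.lattice := by
        refine (add_or_sub_mem L hu₁ hu₂ hp).resolve_left fun h ↦ hb (ι.injective ?_)
        rw [map_neg, ← p₁', ← p₂', wp'_eq_of_add L h]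
      have hvs : v₁ - v₂ ∈ L.lattice := by
        refine (add_or_sub_mem L hv₁ hv₂ hq).resolve_left fun h ↦ hb (σ.injective ?_)
        rw [map_neg, ← q₁', ← q₂', wp'_eq_of_add L h]
      have hbb : b₁ = b₂ := ι.injective (by rw [← p₁', ← p₂', wp'_eq_of_sub L hus])
      subst hbb
      have hb0 : b₁ ≠ 0 := by
        rintro rfl
        simp at hb
      have hu : 2 * u₁ ∉ L.lattice := fun h ↦
        hb0 (ι.injective (by rw [← p₁', map_zero, wp'_eq_zero L h]))
      have hv : 2 * v₁ ∉ L.lattice := fun h ↦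
        hb0 (σ.injective (by rw [← q₁', map_zero, wp'_eq_zero L h]))
      have h2 : Rel L ι σ (2 * u₁) (2 * v₁) := by
        refine .inr ⟨hu, hv, dblX g a₁ b₁, dblY g a₁ b₁, ?_⟩
        rw [wp_dbl_eq L hu, wp_dbl_eq L hv, wp'_dbl_eq L hu, wp'_dbl_eq L hv, p₁, p₁', q₁, q₁']
        simp [dblX, dblY, hι, hσ, map_ofNat]
      convert h2.add_lattice (neg_mem hus) (neg_mem hvs) using 1 <;> ring
  · have hp : ℘[L] u₁ ≠ ℘[L] u₂ := fun h ↦ ha (ι.injective (by rw [← p₁, ← p₂, h]))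
    have hq : ℘[L] v₁ ≠ ℘[L] v₂ := fun h ↦ ha (σ.injective (by rw [← q₁, ← q₂, h]))
    have e1 : u₁ + u₂ ∉ L.lattice := fun h ↦ hp (wp_eq_of_add L h)
    have e2 : u₁ - u₂ ∉ L.lattice := fun h ↦ hp (wp_eq_of_sub L h)
    have e3 : v₁ + v₂ ∉ L.lattice := fun h ↦ hq (wp_eq_of_add L h)
    have e4 : v₁ - v₂ ∉ L.lattice := fun h ↦ hq (wp_eq_of_sub L h)
    refine .inr ⟨e1, e3, addX g a₁ b₁ a₂ b₂, addY g a₁ b₁ a₂ b₂, ?_⟩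
    rw [wp_add_eq L hu₁ hu₂ e1 e2, wp_add_eq L hv₁ hv₂ e3 e4, wp'_add_eq L hu₁ hu₂ e1 e2,
      wp'_add_eq L hv₁ hv₂ e3 e4, p₁, p₁', q₁, q₁', p₂, p₂', q₂, q₂']
    simp [addX, addY, addN, hι, hσ, map_ofNat]

lemma Rel.natCast_mul {g : F} (hι : ι g = L.g₂) (hσ : σ g = L.g₂) {u v : ℂ}
    (h : Rel L ι σ u v) (n : ℕ) : Rel L ι σ (n * u) (n * v) := by
  induction n with
  | zero => exact .inl (by simp)
  | succ n ih =>
    convert Rel.add hι hσ ih h using 1 <;> push_cast <;> ring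

end Rel

/-- The properties of a field of constants that are needed below: it is relatively algebraically
closed in `ℂ` and contains the invariants, the periods and the quasi-periods of the lattice. -/
structure Good (K : Subfield ℂ) : Prop where
  closed : ∀ x : ℂ, IsAlgebraic K x → x ∈ K
  g₂_mem : L.g₂ ∈ K
  g₃_mem : L.g₃ ∈ K
  ω₁_mem : L.ω₁ ∈ K
  ω₂_mem : L.ω₂ ∈ K
  η₁_mem : eta L L.ω₁ ∈ K
  η₂_mem : eta L L.ω₂ ∈ K

/-- `u` maps to a `K`-rational point of the cubic. At a lattice point both `℘` and `℘'` take the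
junk value `0`, so lattice points are included, as they should be. -/
def Rat (K : Subfield ℂ) (u : ℂ) : Prop := ℘[L] u ∈ K ∧ ℘'[L] u ∈ K

section Rat

variable {L} {K : Subfield ℂ}

lemma rat_of_mem {u : ℂ} (hu : u ∈ L.lattice) : Rat L K u := by
  rw [Rat, wp_coe L hu, wp'_coe L hu]
  exact ⟨zero_mem _, zero_mem _⟩

/-- Rational points are the diagonal of the correspondence attached to the inclusion `K → ℂ` taken
twice, so that facts on `Rel` apply to them. -/
lemma rat_iff_rel {u : ℂ} : Rat L K u ↔ Rel L K.subtype K.subtype u u := by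
  constructor
  · rintro ⟨h1, h2⟩
    by_cases hu : u ∈ L.lattice
    · exact .inl ⟨hu, hu⟩
    · exact .inr ⟨hu, hu, ⟨_, h1⟩, ⟨_, h2⟩, rfl, rfl, rfl, rfl⟩
  · rintro (⟨h, -⟩ | ⟨-, -, a, b, h1, h2, -⟩)
    · exact rat_of_mem h
    · rw [Rat, h1, h2]
      exact ⟨a.2, b.2⟩

lemma Rat.neg {u : ℂ} (hu : Rat L K u) : Rat L K (-u) := by
  rw [rat_iff_rel] at *
  exact hu.neg

lemma Good.rat_add (hK : Good L K) {u v : ℂ} (hu : Rat L K u) (hv : Rat L K v) :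
    Rat L K (u + v) := by
  rw [rat_iff_rel] at *
  exact Rel.add (g := ⟨_, hK.g₂_mem⟩) rfl rfl hu hv

/-- Rationality of `℘(u)` suffices, as `℘'(u)` is a square root of a polynomial in it. -/
lemma Good.rat_of_wp (hK : Good L K) {u : ℂ} (hu : ℘[L] u ∈ K) : Rat L K u := by
  by_cases h : u ∈ L.lattice
  · exact rat_of_mem h
  refine ⟨hu, hK.closed _ ?_⟩
  refine IsAlgebraic.of_pow (n := 2) two_pos ?_
  rw [L.derivWeierstrassP_sq u h]
  have : 4 * ℘[L] u ^ 3 - L.g₂ * ℘[L] u - L.g₃ ∈ K :=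
    sub_mem (sub_mem (mul_mem (by exact_mod_cast natCast_mem K 4) (pow_mem hu 3))
      (mul_mem hK.g₂_mem hu)) hK.g₃_mem
  exact isAlgebraic_algebraMap (⟨_, this⟩ : K)

lemma eta_zero : eta L 0 = 0 := by
  have := eta_add L (zero_mem L.lattice) (zero_mem _)
  simpa using this

lemma eta_neg {l : ℂ} (hl : l ∈ L.lattice) : eta L (-l) = -eta L l := by
  have := eta_add L hl (neg_mem hl)
  rw [add_neg_cancel, eta_zero] at this
  linear_combination -this

/-- The lattice points that lie in `K` together with their quasi-periods. -/
def etaGroup (L : PeriodPair) (K : Subfield ℂ) : AddSubgroup ℂ where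
  carrier := {l | l ∈ L.lattice ∧ eta L l ∈ K ∧ l ∈ K}
  zero_mem' := ⟨zero_mem _, by rw [eta_zero]; exact zero_mem _, zero_mem _⟩
  add_mem' := fun ha hb ↦ ⟨add_mem ha.1 hb.1, by
    rw [eta_add L ha.1 hb.1]; exact add_mem ha.2.1 hb.2.1, add_mem ha.2.2 hb.2.2⟩
  neg_mem' := fun ha ↦ ⟨neg_mem ha.1, by
    rw [eta_neg ha.1]; exact neg_mem ha.2.1, neg_mem ha.2.2⟩

lemma Good.mem_etaGroup (hK : Good L K) {l : ℂ} (hl : l ∈ L.lattice) : l ∈ etaGroup L K := by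
  obtain ⟨m, n, rfl⟩ := L.mem_lattice.mp hl
  have h1 : L.ω₁ ∈ etaGroup L K := ⟨L.ω₁_mem_lattice, hK.η₁_mem, hK.ω₁_mem⟩
  have h2 : L.ω₂ ∈ etaGroup L K := ⟨L.ω₂_mem_lattice, hK.η₂_mem, hK.ω₂_mem⟩
  simpa using add_mem (zsmul_mem h1 m) (zsmul_mem h2 n)

lemma Good.eta_mem (hK : Good L K) {l : ℂ} (hl : l ∈ L.lattice) : eta L l ∈ K :=
  (hK.mem_etaGroup hl).2.1

lemma Good.mem (hK : Good L K) {l : ℂ} (hl : l ∈ L.lattice) : l ∈ K := (hK.mem_etaGroup hl).2.2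

lemma two_mem : (2 : ℂ) ∈ K := by exact_mod_cast natCast_mem K 2

lemma Good.zet_add_lattice (hK : Good L K) {z l : ℂ} (hl : l ∈ L.lattice) :
    zet L (z + l) - zet L z ∈ K := by
  by_cases hz : z ∈ L.lattice
  · rw [zet_eq_zero L hz, zet_eq_zero L (add_mem hz hl), sub_zero]
    exact zero_mem _
  · rw [zet_add L hz hl, add_sub_cancel_left]
    exact hK.eta_mem hl

/-- On `K`-rational points `ζ` is additive modulo `K`. -/
lemma Good.zet_add_sub (hK : Good L K) {u v : ℂ} (hu : Rat L K u) (hv : Rat L K v) :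
    zet L (u + v) - zet L u - zet L v ∈ K := by
  by_cases hul : u ∈ L.lattice
  · rw [zet_eq_zero L hul, sub_zero, add_comm]
    exact hK.zet_add_lattice hul
  by_cases hvl : v ∈ L.lattice
  · rw [zet_eq_zero L hvl, sub_zero]
    exact hK.zet_add_lattice hvl
  by_cases ha : u + v ∈ L.lattice
  · have h1 := hK.zet_add_lattice (z := -u) ha
    rw [show -u + (u + v) = v by ring, zet_neg] at h1
    rw [zet_eq_zero L ha]
    convert neg_mem h1 using 1
    ring
  by_cases hs : u - v ∈ L.lattice
  · have hs' : v - u ∈ L.lattice := by simpa using neg_mem hs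
    have h2 : 2 * u ∉ L.lattice := fun h ↦ ha (by
      convert add_mem h hs' using 1
      ring)
    have h3 := hK.zet_add_lattice (z := u) hs'
    have h4 := hK.zet_add_lattice (z := 2 * u) hs'
    rw [show u + (v - u) = v by ring] at h3
    rw [show 2 * u + (v - u) = u + v by ring, zet_dbl_eq L h2] at h4
    have h5 : (6 * ℘[L] u ^ 2 - L.g₂ / 2) / (2 * ℘'[L] u) ∈ K :=
      div_mem (sub_mem (mul_mem (by exact_mod_cast natCast_mem K 6) (pow_mem hu.1 2))
        (div_mem hK.g₂_mem two_mem)) (mul_mem two_mem hu.2)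
    convert add_mem (sub_mem h4 h3) h5 using 1
    ring
  · rw [zet_add_eq L hul hvl ha hs]
    convert div_mem (sub_mem hu.2 hv.2) (mul_mem (two_mem (K := K)) (sub_mem hu.1 hv.1)) using 1
    ring

end Rat

/-! ### Surjectivity of `℘` and division of points -/

/-- `℘` takes every complex value: otherwise `1/(℘ - c)` would extend to a bounded entire
function vanishing on the lattice. -/
lemma exists_wp_eq (c : ℂ) : ∃ z, z ∉ L.lattice ∧ ℘[L] z = c := by
  classical
  by_contra! hc
  set g : ℂ → ℂ := fun z ↦ if z ∈ L.lattice then 0 else 1 / (℘[L] z - c) with hg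
  have hper : ∀ z, ∀ l ∈ L.lattice, g (z + l) = g z := by
    intro z l hl
    simp only [hg, wp_add L hl]
    congr 1
    exact propext (add_mem_cancel_right hl)
  have hg0 : DifferentiableAt ℂ g 0 := by
    have hE : AnalyticAt ℂ ℘[L - (0 : ℂ)] 0 := L.analyticAt_weierstrassPExcept 0
    have h1 : AnalyticAt ℂ (fun z ↦ z ^ 2 / (1 + z ^ 2 * (℘[L - (0 : ℂ)] z - c))) 0 := by
      refine AnalyticAt.div (by fun_prop) (by fun_prop) (by simp)
    refine h1.differentiableAt.congr_of_eventuallyEq ?_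
    filter_upwards [L.compl_lattice_sdiff_singleton_mem_nhds 0] with u hu'
    by_cases hu0 : u = 0
    · simp [hg, hu0]
    have hul : u ∉ L.lattice := fun h ↦ hu' ⟨h, hu0⟩
    have hwp := L.weierstrassPExcept_add 0 u
    simp only [ZeroMemClass.coe_zero, sub_zero] at hwp
    have hne : ℘[L] u - c ≠ 0 := sub_ne_zero.mpr (hc u hul)
    simp only [hg, if_neg hul]
    have e : 1 + u ^ 2 * (℘[L - (0 : ℂ)] u - c) = u ^ 2 * (℘[L] u - c) := by
      rw [← hwp]
      field_simp
      simp
      ring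
    rw [e]
    field_simp
  have hdiff : Differentiable ℂ g := by
    intro x
    by_cases hx : x ∈ L.lattice
    · have h : g = fun y ↦ g (y - x) := by
        ext y
        rw [← hper (y - x) x hx, sub_add_cancel]
      rw [h]
      rw [← sub_self x] at hg0
      exact hg0.comp x (f := fun y ↦ y - x) (by fun_prop)
    · have h1 : DifferentiableAt ℂ (fun z ↦ 1 / (℘[L] z - c)) x :=
        (differentiableAt_const _).div
          ((L.analyticOnNhd_weierstrassP x hx).differentiableAt.sub_const _)
          (sub_ne_zero.mpr (hc x hx))
      refine h1.congr_of_eventuallyEq ?_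
      filter_upwards [(isOpen_compl L).mem_nhds hx] with y hy
      exact if_neg hy
  have hconst := hdiff.apply_eq_apply_of_bounded (IsZLattice.isCompact_range_of_periodic L.lattice _
    hdiff.continuous fun z w hw ↦ hper z w hw).isBounded ((L.ω₁ + L.ω₂) / 3) 0
  have h0 := third_notMem L
  simp only [hg, if_neg h0, if_pos (zero_mem L.lattice)] at hconst
  exact one_div_ne_zero (sub_ne_zero.mpr (hc _ h0)) hconst

/-- A transcendental `t` is a specialization of the variable of `K(X)`. -/
lemma exists_embedding {K : Subfield ℂ} {t : ℂ} (ht : Transcendental K t) :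
    ∃ θ : AlgebraicClosure (RatFunc K) →+* ℂ,
      (∀ k : K, θ (algebraMap (RatFunc K) _ (RatFunc.C k)) = k) ∧
      θ (algebraMap (RatFunc K) _ RatFunc.X) = t := by
  have hle : nonZeroDivisors (Polynomial K) ≤
      (nonZeroDivisors ℂ).comap (Polynomial.aeval (R := K) t) := by
    intro p hp
    rw [Submonoid.mem_comap, mem_nonZeroDivisors_iff_ne_zero]
    exact fun h ↦ nonZeroDivisors.ne_zero hp (transcendental_iff.mp ht p h)
  let φ : RatFunc K →ₐ[K] ℂ := RatFunc.liftAlgHom (Polynomial.aeval t) hle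
  let : Algebra (RatFunc K) ℂ := φ.toRingHom.toAlgebra
  let θ : AlgebraicClosure (RatFunc K) →ₐ[RatFunc K] ℂ := IsAlgClosed.lift
  have hφ : ∀ r : RatFunc K, θ (algebraMap (RatFunc K) _ r) = φ r := fun r ↦ θ.commutes r
  refine ⟨θ.toRingHom, fun k ↦ ?_, ?_⟩
  · refine (hφ _).trans ?_
    rw [← RatFunc.algebraMap_eq_C]
    exact φ.commutes k
  · refine (hφ _).trans ?_
    rw [← RatFunc.algebraMap_X]
    exact (RatFunc.liftRingHom_algebraMap _ _ _).trans (Polynomial.aeval_X t)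

section Rat

variable {L} {K : Subfield ℂ}

/-- The group of `K`-rational points is divisible-closed. If `q` were not rational, `℘(q)` could be
specialized to infinitely many other values while `Nq` stays fixed, but there are only finitely
many `v` modulo the lattice with `Nv ≡ Nq`. -/
lemma Good.rat_of_mul (hK : Good L K) {N : ℕ} (hN : N ≠ 0) {q : ℂ} (h : Rat L K (N * q)) :
    Rat L K q := by
  by_contra hq
  have hx : ℘[L] q ∉ K := fun h ↦ hq (hK.rat_of_wp h)
  have hql : q ∉ L.lattice := fun h ↦ hq (rat_of_mem h)
  have htr : ∀ j : ℕ, Transcendental K (℘[L] q + j) := by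
    intro j hj
    have := sub_mem (hK.closed _ hj) (natCast_mem K j)
    rw [add_sub_cancel_right] at this
    exact hx this
  have hx0 : Transcendental K (℘[L] q) := fun h ↦ hx (hK.closed _ h)
  obtain ⟨ι, hιK, hιX⟩ := exists_embedding hx0
  choose σ hσK hσX using fun j ↦ exists_embedding (htr j)
  let incl : K →+* AlgebraicClosure (RatFunc K) :=
    (algebraMap (RatFunc K) _).comp RatFunc.C
  set a : AlgebraicClosure (RatFunc K) := algebraMap (RatFunc K) _ RatFunc.X with ha
  have hιK' : ∀ k : K, ι (incl k) = k := hιK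
  have hσK' : ∀ (j : ℕ) (k : K), σ j (incl k) = k := hσK
  set g : AlgebraicClosure (RatFunc K) := incl ⟨_, hK.g₂_mem⟩ with hg
  set g' : AlgebraicClosure (RatFunc K) := incl ⟨_, hK.g₃_mem⟩ with hg'
  obtain ⟨b, hb⟩ : ∃ b, b ^ 2 = 4 * a ^ 3 - g * a - g' :=
    IsAlgClosed.exists_pow_nat_eq _ two_pos
  have hιb : ℘'[L] q ^ 2 = ι b ^ 2 := by
    rw [L.derivWeierstrassP_sq q hql, ← map_pow, hb]
    simp [map_ofNat, hg, hg', hιK', hιX]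
  obtain ⟨b, hb, hb'⟩ : ∃ b, b ^ 2 = 4 * a ^ 3 - g * a - g' ∧ ℘'[L] q = ι b := by
    rcases sq_eq_sq_iff_eq_or_eq_neg.mp hιb with h1 | h1
    · exact ⟨b, hb, h1⟩
    · exact ⟨-b, by rw [neg_sq, hb], by rw [h1, map_neg]⟩
  have hv : ∀ j : ℕ, ∃ v, v ∉ L.lattice ∧ ℘[L] v = ℘[L] q + j ∧ ℘'[L] v = σ j b := by
    intro j
    obtain ⟨v, hv, hvj⟩ := exists_wp_eq L (℘[L] q + j)
    have hσb : ℘'[L] v ^ 2 = σ j b ^ 2 := by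
      rw [L.derivWeierstrassP_sq v hv, ← map_pow, hb, hvj]
      simp [map_ofNat, hg, hg', hσK', hσX]
    rcases sq_eq_sq_iff_eq_or_eq_neg.mp hσb with h1 | h1
    -- replacing `v` by `-v` corrects the sign of `℘'(v)`
    · exact ⟨v, hv, hvj, h1⟩
    · exact ⟨-v, neg_notMem L hv, by rw [weierstrassP_neg, hvj],
        by rw [derivWeierstrassP_neg, h1, neg_neg]⟩
  choose v hv hvx hvy using hv
  have hrel : ∀ j, Rel L ι (σ j) (N * q) (N * v j) := fun j ↦
    Rel.natCast_mul (g := g) (by rw [hg, hιK']) (by rw [hg, hσK'])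
      (.inr ⟨hql, hv j, a, b, hιX.symm, hb', by rw [hvx, hσX], hvy j⟩) N
  have hmem : ∀ j, N * v j - N * q ∈ L.lattice := by
    intro j
    rcases hrel j with ⟨h1, h2⟩ | ⟨h1, h2, a', b', e1, e2, e3, e4⟩
    · exact sub_mem h2 h1
    · have ea : a' = incl ⟨_, h.1⟩ := ι.injective (by rw [hιK', ← e1])
      have eb : b' = incl ⟨_, h.2⟩ := ι.injective (by rw [hιK', ← e2])
      rw [ea, hσK'] at e3
      rw [eb, hσK'] at e4
      exact sub_mem_of_eq L h2 h1 e3 e4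
  choose m n hmn using fun j ↦ L.mem_lattice.mp (hmem j)
  -- `N(v j - q)` takes only finitely many values modulo `NΛ`, so `v i ≡ v j` for some `i ≠ j`
  have : NeZero N := ⟨hN⟩
  obtain ⟨i, j, hij, hf⟩ := Finite.exists_ne_map_eq_of_infinite
    (fun j ↦ ((m j : ZMod N), (n j : ZMod N)))
  simp only [Prod.mk.injEq] at hf
  rw [ZMod.intCast_eq_intCast_iff_dvd_sub, ZMod.intCast_eq_intCast_iff_dvd_sub] at hf
  obtain ⟨⟨c, hc⟩, ⟨d, hd⟩⟩ := hf
  have hN' : (N : ℂ) ≠ 0 := Nat.cast_ne_zero.mpr hN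
  have hsub : v j - v i ∈ L.lattice := by
    refine L.mem_lattice.mpr ⟨c, d, mul_left_cancel₀ hN' ?_⟩
    have hc' := congrArg (Int.cast : ℤ → ℂ) hc
    have hd' := congrArg (Int.cast : ℤ → ℂ) hd
    push_cast at hc' hd'
    linear_combination hmn j - hmn i - L.ω₁ * hc' - L.ω₂ * hd'
  have := wp_eq_of_sub L hsub
  rw [hvx, hvx] at this
  exact hij (by exact_mod_cast (add_left_cancel this).symm)

/-- The points `u ∈ K` such that `℘(u)`, `℘'(u)` and `ζ(u)` lie in `K` (with the junk value `0` at
lattice points). -/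
structure Pt (L : PeriodPair) (K : Subfield ℂ) (u : ℂ) : Prop where
  mem : u ∈ K
  rat : Rat L K u
  zet : EllRel.zet L u ∈ K

lemma Good.pt_add (hK : Good L K) {u v : ℂ} (hu : Pt L K u) (hv : Pt L K v) :
    Pt L K (u + v) := by
  refine ⟨add_mem hu.mem hv.mem, hK.rat_add hu.rat hv.rat, ?_⟩
  convert add_mem (add_mem (hK.zet_add_sub hu.rat hv.rat) hv.zet) hu.zet using 1
  ring

lemma Pt.neg {u : ℂ} (hu : Pt L K u) : Pt L K (-u) :=
  ⟨neg_mem hu.mem, hu.rat.neg, by rw [zet_neg]; exact neg_mem hu.zet⟩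

lemma Good.pt_of_mem (hK : Good L K) {u : ℂ} (hu : u ∈ L.lattice) : Pt L K u :=
  ⟨hK.mem hu, rat_of_mem hu, by rw [zet_eq_zero L hu]; exact zero_mem _⟩

lemma Good.pt_sum (hK : Good L K) {ι : Type*} (s : Finset ι) (f : ι → ℂ)
    (h : ∀ i ∈ s, Pt L K (f i)) : Pt L K (∑ i ∈ s, f i) := by
  induction s using Finset.cons_induction with
  | empty => simpa using hK.pt_of_mem (zero_mem _)
  | cons i s hi ih =>
    rw [Finset.sum_cons]
    exact hK.pt_add (h i (by simp)) (ih fun j hj ↦ h j (by simp [hj]))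

lemma Good.rat_natCast_mul (hK : Good L K) {u : ℂ} (hu : Rat L K u) (n : ℕ) :
    Rat L K (n * u) := by
  rw [rat_iff_rel] at *
  exact Rel.natCast_mul (g := ⟨_, hK.g₂_mem⟩) rfl rfl hu n

/-- `ζ(nu) ≡ nζ(u)` modulo `K`; this passes from `ζ(Nu)` to `ζ(u)` in `Good.pt_of_mul`. -/
lemma Good.zet_natCast_mul (hK : Good L K) {u : ℂ} (hu : Rat L K u) (n : ℕ) :
    EllRel.zet L (n * u) - n * EllRel.zet L u ∈ K := by
  induction n with
  | zero => simp [zet_eq_zero L (zero_mem _)]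
  | succ n ih =>
    convert add_mem (hK.zet_add_sub (hK.rat_natCast_mul hu n) hu) ih using 1
    push_cast
    rw [add_mul, one_mul]
    ring

lemma Good.pt_of_mul (hK : Good L K) {N : ℕ} (hN : N ≠ 0) {u : ℂ} (h : Pt L K (N * u)) :
    Pt L K u := by
  have hN' : (N : ℂ) ≠ 0 := Nat.cast_ne_zero.mpr hN
  have hr := hK.rat_of_mul hN h.rat
  refine ⟨?_, hr, ?_⟩
  · convert div_mem h.mem (natCast_mem K N) using 1
    field_simp
  · convert div_mem (sub_mem h.zet (hK.zet_natCast_mul hr N)) (natCast_mem K N) using 1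
    field_simp
    ring

lemma Good.pt_of_intCast_mul (hK : Good L K) {N : ℤ} (hN : N ≠ 0) {u : ℂ}
    (h : Pt L K (N * u)) : Pt L K u := by
  obtain ⟨n, rfl | rfl⟩ := N.eq_nat_or_neg
  · exact hK.pt_of_mul (by simpa using hN) (by simpa using h)
  · exact hK.pt_of_mul (N := n) (by simpa using hN) (by simpa using h.neg)

end Rat

/-! ### Complex multiplication -/

/-- If `αΛ ⊆ Λ` with `α ≠ 0`, then `α⁻¹Λ` is a finite union of cosets `ρ i + Λ`, and the `ρ i` are
torsion modulo `Λ`. -/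
lemma exists_coset {α : ℂ} (hα0 : α ≠ 0) (hα : ∀ l ∈ L.lattice, α * l ∈ L.lattice) :
    ∃ (ι : Type) (_ : Fintype ι) (ρ : ι → ℂ) (e : ι × L.lattice ≃ L.lattice) (N : ℕ),
      (∀ i m, (e (i, m) : ℂ) = α * (ρ i + m)) ∧ N ≠ 0 ∧ ∀ i, N * ρ i ∈ L.lattice := by
  let φ : L.lattice →ₗ[ℤ] L.lattice :=
    { toFun := fun l ↦ ⟨α * l, hα l l.2⟩
      map_add' := fun a b ↦ Subtype.ext (by simp [mul_add])
      map_smul' := fun a b ↦ Subtype.ext (by simp; ring) }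
  have hφ : ∀ l, (φ l : ℂ) = α * l := fun l ↦ rfl
  have hinj : Function.Injective φ := fun a b h ↦ Subtype.ext (by
    have := congrArg (Subtype.val) h
    rw [hφ, hφ] at this
    exact mul_left_cancel₀ hα0 this)
  have hfin : Finite (L.lattice ⧸ LinearMap.range φ) :=
    Submodule.finiteQuotientOfFreeOfRankEq _ (LinearMap.finrank_range_of_inj hinj)
  obtain ⟨k, ⟨q⟩⟩ := Finite.exists_equiv_fin (L.lattice ⧸ LinearMap.range φ)
  choose s hs using fun r ↦ Submodule.mkQ_surjective (LinearMap.range φ) r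
  have hker : ∀ l, Submodule.mkQ (LinearMap.range φ) l = 0 ↔ l ∈ LinearMap.range φ := fun l ↦ by
    rw [← LinearMap.mem_ker, Submodule.ker_mkQ]
  have hbij : Function.Bijective
      (fun x : Fin k × L.lattice ↦ s (q.symm x.1) + φ x.2) := by
    constructor
    · rintro ⟨i, m⟩ ⟨j, n⟩ h
      simp only at h
      have h1 := congrArg (Submodule.mkQ (LinearMap.range φ)) h
      rw [map_add, map_add, hs, hs] at h1
      have h2 : ∀ m, Submodule.mkQ (LinearMap.range φ) (φ m) = 0 := fun m ↦ by simp
      rw [h2, h2, add_zero, add_zero] at h1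
      obtain rfl := q.symm.injective h1
      rw [hinj (add_left_cancel h)]
    · intro l
      have h1 : l - s (Submodule.mkQ (LinearMap.range φ) l) ∈ LinearMap.range φ := by
        rw [← hker, map_sub, hs, sub_self]
      obtain ⟨m, hm⟩ := h1
      exact ⟨(q (Submodule.mkQ (LinearMap.range φ) l), m), by simp [hm]⟩
  refine ⟨Fin k, inferInstance, fun i ↦ s (q.symm i) / α, Equiv.ofBijective _ hbij,
    Nat.card (L.lattice ⧸ LinearMap.range φ), ?_, Nat.card_pos.ne', ?_⟩
  · intro i m
    simp [hφ]
    field_simp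
  · intro i
    have h1 : Nat.card (L.lattice ⧸ LinearMap.range φ) • s (q.symm i) ∈ LinearMap.range φ := by
      rw [← hker, map_nsmul]
      exact card_nsmul_eq_zero'
    obtain ⟨m, hm⟩ := h1
    have h2 := congrArg Subtype.val hm
    rw [hφ] at h2
    convert m.2 using 1
    simp at h2
    field_simp
    linear_combination -h2

/-- Complex multiplication: `℘(αz)` as a sum over the cosets of `α⁻¹Λ / Λ`, obtained by regrouping
the defining series. With the junk value `℘(l) = 0` at lattice points it holds everywhere. -/
lemma wp_mul_eq {α : ℂ} (hα0 : α ≠ 0) {ι : Type} [Fintype ι] {ρ : ι → ℂ}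
    (e : ι × L.lattice ≃ L.lattice) (he : ∀ i m, (e (i, m) : ℂ) = α * (ρ i + m)) (z : ℂ) :
    α ^ 2 * ℘[L] (α * z) = ∑ i, (℘[L] (z - ρ i) - ℘[L] (-ρ i)) := by
  have h1 := (e.hasSum_iff.mpr (L.hasSum_weierstrassP (α * z))).mul_left (α ^ 2)
  have h2 : ∀ i, HasSum (fun m : L.lattice ↦
      (1 / (z - ρ i - m) ^ 2 - 1 / (m : ℂ) ^ 2) - (1 / (-ρ i - m) ^ 2 - 1 / (m : ℂ) ^ 2))
      (℘[L] (z - ρ i) - ℘[L] (-ρ i)) := fun i ↦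
    (L.hasSum_weierstrassP (z - ρ i)).sub (L.hasSum_weierstrassP (-ρ i))
  refine (h1.prod_fiberwise fun i ↦ ?_).unique (hasSum_fintype _)
  convert! h2 i using 1
  funext m
  rw [Function.comp_apply, he]
  rw [show α * z - α * (ρ i + m) = α * (z - ρ i - m) by ring,
    show (-ρ i - m : ℂ) = -(ρ i + m) by ring, neg_sq, mul_pow, mul_pow]
  simp only [one_div, mul_inv]
  have : α ^ 2 * (α ^ 2)⁻¹ = 1 := mul_inv_cancel₀ (pow_ne_zero 2 hα0)
  linear_combination (((z - ρ i - m) ^ 2)⁻¹ - ((ρ i + m : ℂ) ^ 2)⁻¹) * this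

/-- The integrated form of `wp_mul_eq`. -/
lemma exists_zet_mul_eq {α : ℂ} (hα0 : α ≠ 0) (hα : ∀ l ∈ L.lattice, α * l ∈ L.lattice)
    {ι : Type} [Fintype ι] {ρ : ι → ℂ}
    (e : ι × L.lattice ≃ L.lattice) (he : ∀ i m, (e (i, m) : ℂ) = α * (ρ i + m)) :
    ∃ D, ∀ z, α * z ∉ L.lattice →
      α * zet L (α * z) - ∑ i, zet L (z - ρ i) - (∑ i, ℘[L] (-ρ i)) * z = D := by
  have hρ : ∀ i, α * ρ i ∈ L.lattice := fun i ↦ by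
    have := he i 0
    simp only [ZeroMemClass.coe_zero, add_zero] at this
    rw [← this]
    exact (e (i, 0)).2
  set U : Set ℂ := {z | α * z ∉ L.lattice} with hU
  have hUo : IsOpen U := (isOpen_compl L).preimage (f := fun z ↦ α * z) (by fun_prop)
  have hUc : IsPreconnected U := by
    have hc : (Uᶜ).Countable := by
      have : (L.lattice : Set ℂ).Countable :=
        Set.countable_coe_iff.mp (inferInstanceAs (Countable L.lattice))
      refine (this.image fun z ↦ z / α).mono fun z hz ↦
        (Set.mem_image _ _ _).mpr ⟨α * z, not_not.mp hz, ?_⟩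
      field_simp
    have := (Set.Countable.isConnected_compl_of_one_lt_rank (by simp) hc).isPreconnected
    rwa [compl_compl] at this
  have hd : ∀ z ∈ U, HasDerivAt (fun z ↦ α * zet L (α * z) - ∑ i, zet L (z - ρ i) -
      (∑ i, ℘[L] (-ρ i)) * z) 0 z := by
    intro z hz
    have h1 : HasDerivAt (fun z ↦ α * zet L (α * z)) (α * (-℘[L] (α * z) * α)) z := by
      have := (hasDerivAt_zet L hz).comp z ((hasDerivAt_id z).const_mul α)
      simpa [Function.comp_def] using! this.const_mul α
    have h2 : HasDerivAt (fun z ↦ ∑ i, zet L (z - ρ i)) (∑ i, -℘[L] (z - ρ i)) z := by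
      refine HasDerivAt.fun_sum fun i _ ↦ (hasDerivAt_zet L fun h ↦ hz ?_).comp_sub_const z (ρ i)
      convert add_mem (hα _ h) (hρ i) using 1
      ring
    have h3 := (h1.sub h2).sub ((hasDerivAt_id z).const_mul (∑ i, ℘[L] (-ρ i)))
    convert! h3 using 1
    have := wp_mul_eq L hα0 e he z
    rw [Finset.sum_sub_distrib] at this
    rw [Finset.sum_neg_distrib]
    linear_combination this
  obtain ⟨D, hD⟩ := hUo.exists_is_const_of_deriv_eq_zero hUc
    (fun x hx ↦ (hd x hx).differentiableAt.differentiableWithinAt) (fun x hx ↦ (hd x hx).deriv)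
  exact ⟨D, hD⟩

variable {L}

/-- The points over `K` are stable under complex multiplication. -/
lemma Good.pt_mul {K : Subfield ℂ} (hK : Good L K) {α u : ℂ}
    (hα : ∀ l ∈ L.lattice, α * l ∈ L.lattice) (hu : Pt L K u) : Pt L K (α * u) := by
  rcases eq_or_ne α 0 with rfl | hα0
  · rw [zero_mul]
    exact hK.pt_of_mem (zero_mem _)
  by_cases hαu : α * u ∈ L.lattice
  · exact hK.pt_of_mem hαu
  have hω0 : L.ω₁ ≠ 0 := fun h ↦ L.ω₁_div_two_notMem_lattice (by simp [h])
  have hαK : α ∈ K := by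
    convert div_mem (hK.mem (hα _ L.ω₁_mem_lattice)) hK.ω₁_mem using 1
    field_simp
  obtain ⟨ι, _, ρ, e, N, he, hN, hNρ⟩ := exists_coset L hα0 hα
  have hρ : ∀ i, Pt L K (-ρ i) := fun i ↦ (hK.pt_of_mul hN (hK.pt_of_mem (hNρ i))).neg
  have hsub : ∀ {z}, Pt L K z → ∀ i, Pt L K (z - ρ i) := fun hz i ↦ by
    rw [sub_eq_add_neg]
    exact hK.pt_add hz (hρ i)
  have hC : ∑ i, ℘[L] (-ρ i) ∈ K := sum_mem fun i _ ↦ (hρ i).rat.1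
  have hwp : ℘[L] (α * u) ∈ K := by
    have h1 : ∑ i, (℘[L] (u - ρ i) - ℘[L] (-ρ i)) ∈ K :=
      sum_mem fun i _ ↦ sub_mem (hsub hu i).rat.1 (hρ i).rat.1
    rw [← wp_mul_eq L hα0 e he] at h1
    convert div_mem h1 (pow_mem hαK 2) using 1
    field_simp
  obtain ⟨D, hD⟩ := exists_zet_mul_eq L hα0 hα e he
  -- the constant of integration is found by evaluating at the torsion point `ω₁ / (2α)`
  have hhalf : Pt L K (L.ω₁ / 2) := by
    refine hK.pt_of_mul (N := 2) two_ne_zero (hK.pt_of_mem ?_)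
    convert L.ω₁_mem_lattice using 1
    push_cast
    ring
  have hz0 : Pt L K (L.ω₁ / 2 / α) := by
    obtain ⟨⟨i, m⟩, him⟩ := e.surjective ⟨L.ω₁, L.ω₁_mem_lattice⟩
    have h1 := he i m
    rw [him] at h1
    have h2 : Pt L K (ρ i + m) := by
      have := (hρ i).neg
      rw [neg_neg] at this
      exact hK.pt_add this (hK.pt_of_mem m.2)
    refine hK.pt_of_mul (N := 2) two_ne_zero ?_
    convert h2 using 1
    simp only at h1
    rw [h1]
    push_cast
    field_simp
  have hαz : α * (L.ω₁ / 2 / α) = L.ω₁ / 2 := by field_simp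
  have hDK : D ∈ K := by
    rw [← hD (L.ω₁ / 2 / α) (by rw [hαz]; exact L.ω₁_div_two_notMem_lattice), hαz]
    exact sub_mem (sub_mem (mul_mem hαK hhalf.zet) (sum_mem fun i _ ↦ (hsub hz0 i).zet))
      (mul_mem hC hz0.mem)
  have hzet : α * zet L (α * u) ∈ K := by
    have := hD u hαu
    convert add_mem (add_mem hDK (sum_mem fun i _ ↦ (hsub hu i).zet)) (mul_mem hC hu.mem) using 1
    linear_combination this
  refine ⟨mul_mem hαK hu.mem, hK.rat_of_wp hwp, ?_⟩
  convert div_mem hzet hαK using 1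
  field_simp

/-! ### The algebraic closure as a field of constants -/

lemma Good.pt_endQ_mul {K : Subfield ℂ} (hK : Good L K) {b u : ℂ} (hb : b ∈ endQ L.ω₁ L.ω₂)
    (hu : Pt L K u) : Pt L K (b * u) := by
  obtain ⟨m, hm, h⟩ := hb
  refine hK.pt_of_intCast_mul hm ?_
  rw [← mul_assoc]
  refine hK.pt_mul (fun l hl ↦ ?_) hu
  rw [← SetLike.mem_coe, ← latticePts_eq] at hl ⊢
  exact h l hl

/-- The elements of `ℂ` that are algebraic over a subfield containing the invariants, the periods and
the quasi-periods form a field as in `Good`. -/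
lemma good_algebraicClosure {F : IntermediateField ℚ ℂ}
    (h : ∀ x ∈ ({L.g₂, L.g₃, L.ω₁, L.ω₂, eta L L.ω₁, eta L L.ω₂} : Set ℂ), x ∈ F) :
    Good L (algebraicClosure F ℂ).toSubfield := by
  have hF : ∀ x ∈ F, x ∈ (algebraicClosure F ℂ).toSubfield := fun x hx ↦
    mem_algebraicClosure_iff.mpr (isAlgebraic_algebraMap (⟨x, hx⟩ : F))
  refine ⟨fun x hx ↦ ?_, ?_, ?_, ?_, ?_, ?_, ?_⟩
  · have hx' : IsAlgebraic (algebraicClosure F ℂ) x := hx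
    exact mem_algebraicClosure_iff.mpr (hx'.restrictScalars F)
  all_goals exact hF _ (h _ (by simp))

end EllRel

/-- **Linear relations.** Let `ω ∈ Ω`, `p₁, …, p_n, q ∈ ℂ ∖ Ω`, `b₀, b₁, …, b_n ∈ k`, and
suppose `q = b₀ω + b₁p₁ + ⋯ + b_np_n`.  Then `℘(q)` and `ζ(q)` are algebraic over
`ℚ(g₂, g₃, ω₁, ω₂, η₁, η₂, p₁, …, p_n, ℘(p₁), …, ℘(p_n), ζ(p₁), …, ζ(p_n))`. -/
theorem linear_relation_algebraic (ω₁ ω₂ : ℂ) (hΩ : IsLatticeBasis ω₁ ω₂)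
    (n : ℕ) (ω : ℂ) (hω : ω ∈ LatticePts ω₁ ω₂)
    (p : Fin n → ℂ) (hp : ∀ i, p i ∉ LatticePts ω₁ ω₂)
    (q : ℂ) (hq : q ∉ LatticePts ω₁ ω₂)
    (b₀ : ℂ) (b : Fin n → ℂ) (hb₀ : b₀ ∈ endQ ω₁ ω₂) (hb : ∀ i, b i ∈ endQ ω₁ ω₂)
    (hrel : q = b₀ * ω + ∑ i, b i * p i) :
    IsAlgebraic (IntermediateField.adjoin ℚ
        (({g2 ω₁ ω₂, g3 ω₁ ω₂, ω₁, ω₂, wEta ω₁ ω₂ ω₁, wEta ω₁ ω₂ ω₂} : Set ℂ) ∪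
          Set.range p ∪ Set.range (fun i => wP ω₁ ω₂ (p i)) ∪
          Set.range (fun i => wZeta ω₁ ω₂ (p i))))
      (wP ω₁ ω₂ q) ∧
    IsAlgebraic (IntermediateField.adjoin ℚ
        (({g2 ω₁ ω₂, g3 ω₁ ω₂, ω₁, ω₂, wEta ω₁ ω₂ ω₁, wEta ω₁ ω₂ ω₂} : Set ℂ) ∪
          Set.range p ∪ Set.range (fun i => wP ω₁ ω₂ (p i)) ∪
          Set.range (fun i => wZeta ω₁ ω₂ (p i))))
      (wZeta ω₁ ω₂ q) := by
  let L : PeriodPair := ⟨ω₁, ω₂, hΩ⟩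
  set S : Set ℂ := (({g2 ω₁ ω₂, g3 ω₁ ω₂, ω₁, ω₂, wEta ω₁ ω₂ ω₁, wEta ω₁ ω₂ ω₂} : Set ℂ) ∪
          Set.range p ∪ Set.range (fun i => wP ω₁ ω₂ (p i)) ∪
          Set.range (fun i => wZeta ω₁ ω₂ (p i))) with hS
  set F := IntermediateField.adjoin ℚ S with hF
  have hSF : ∀ x ∈ S, x ∈ F := fun x hx ↦ IntermediateField.subset_adjoin ℚ S hx
  have hmem : ∀ z, z ∈ LatticePts ω₁ ω₂ ↔ z ∈ L.lattice := fun z ↦ by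
    rw [← SetLike.mem_coe, ← EllRel.latticePts_eq]
  have hK : EllRel.Good L (algebraicClosure F ℂ).toSubfield := by
    refine EllRel.good_algebraicClosure fun x hx ↦ hSF x (.inl (.inl (.inl ?_)))
    rwa [← EllRel.g2_eq, ← EllRel.g3_eq] at hx
  have hSK : ∀ x ∈ S, x ∈ (algebraicClosure F ℂ).toSubfield := fun x hx ↦
    mem_algebraicClosure_iff.mpr (isAlgebraic_algebraMap (⟨x, hSF x hx⟩ : F))
  have hpt : ∀ i, EllRel.Pt L (algebraicClosure F ℂ).toSubfield (p i) := fun i ↦ by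
    refine ⟨hSK _ (.inl (.inl (.inr ⟨i, rfl⟩))), hK.rat_of_wp ?_, hSK _ (.inr ⟨i, rfl⟩)⟩
    rw [← EllRel.wP_eq L ((hmem _).not.mp (hp i))]
    exact hSK _ (.inl (.inr ⟨i, rfl⟩))
  have hqpt : EllRel.Pt L (algebraicClosure F ℂ).toSubfield q := by
    rw [hrel]
    exact hK.pt_add (hK.pt_endQ_mul hb₀ (hK.pt_of_mem ((hmem _).mp hω)))
      (hK.pt_sum _ _ fun i _ ↦ hK.pt_endQ_mul (hb i) (hpt i))
  refine ⟨mem_algebraicClosure_iff.mp ?_, mem_algebraicClosure_iff.mp hqpt.zet⟩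
  have := hqpt.rat.1
  rwa [← EllRel.wP_eq L ((hmem _).not.mp hq)] at this
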